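/- arXiv:math/0509470 — 13 statements merged into one kernel-verified Lean document; each statement's English description precedes it below -/
import Mathlib

section
/- If A and B are multisets of prime numbers such that the product of the factorials of the elements of A (with multiplicity) equals the product of the factorials of the elements of B, then A = B. In particular, any two distinct partitions of the same natural number into prime parts yield different multinomial coefficients. -/
/-- The product, with multiplicity, of the factorials of the elements of a multiset. -/
def factorialProd (A : Multiset ℕ) : ℕ := (A.map Nat.factorial).prod

theorem fp_key (A B : Multiset ℕ) (hA : ∀ q ∈ A, Nat.Prime q)
    (h : factorialProd A = factorialProd B) (p : ℕ) (hp : p ∈ A) : ∃ q ∈ B, p ≤ q := by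
  have h1 : p ∣ factorialProd B := by
    rw [← h]
    exact (Nat.dvd_factorial (hA p hp).pos le_rfl).trans
      (Multiset.dvd_prod (Multiset.mem_map_of_mem _ hp))
  obtain ⟨q, hq, hd⟩ := (hA p hp).prime.exists_mem_multiset_map_dvd h1
  exact ⟨q, hq, ((hA p hp).dvd_factorial).1 hd⟩

theorem fp_max (A : Multiset ℕ) (p : ℕ) (hp : p ∈ A) : ∃ m ∈ A, ∀ x ∈ A, x ≤ m := by
  obtain ⟨m, hm, h⟩ := A.toFinset.exists_max_image id ⟨p, by simpa using hp⟩
  exact ⟨m, by simpa using hm, fun x hx => h x (by simpa using hx)⟩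

theorem fp_inj (n : ℕ) : ∀ A B : Multiset ℕ, A.card = n → (∀ q ∈ A, Nat.Prime q) →
    (∀ q ∈ B, Nat.Prime q) → factorialProd A = factorialProd B → A = B := by
  induction n with
  | zero =>
    intro A B hc hA hB h
    rw [Multiset.card_eq_zero] at hc
    subst hc
    symm
    rw [Multiset.eq_zero_iff_forall_notMem]
    intro q hq
    obtain ⟨r, hr, _⟩ := fp_key B 0 hB h.symm q hq
    simp at hr
  | succ n ih =>
    intro A B hc hA hB h
    obtain ⟨a, ha⟩ := Multiset.card_pos_iff_exists_mem.1 (by omega : 0 < A.card)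
    obtain ⟨p, hp, hpm⟩ := fp_max A a ha
    obtain ⟨b, hb, hpb⟩ := fp_key A B hA h p hp
    obtain ⟨q, hq, hqm⟩ := fp_max B b hb
    obtain ⟨c, hcA, hqc⟩ := fp_key B A hB h.symm q hq
    have e : p = q := le_antisymm (hpb.trans (hqm b hb)) (hqc.trans (hpm c hcA))
    subst e
    obtain ⟨A', rfl⟩ := Multiset.exists_cons_of_mem hp
    obtain ⟨B', rfl⟩ := Multiset.exists_cons_of_mem hq
    have h' : factorialProd A' = factorialProd B' := by
      simp only [factorialProd, Multiset.map_cons, Multiset.prod_cons] at h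
      exact Nat.eq_of_mul_eq_mul_left (Nat.factorial_pos p) h
    rw [ih A' B' (by simpa using hc) (fun x hx => hA x (Multiset.mem_cons_of_mem hx))
      (fun x hx => hB x (Multiset.mem_cons_of_mem hx)) h']

/-- If `A` and `B` are multisets of primes with equal products of factorials, then `A = B`.
In particular, any two distinct partitions of the same natural number `n` into prime parts
yield different multinomial coefficients. -/
theorem factorialProd_primes_inj :
    (∀ A B : Multiset ℕ, (∀ q ∈ A, Nat.Prime q) → (∀ q ∈ B, Nat.Prime q) →
      factorialProd A = factorialProd B → A = B) ∧
    (∀ (n : ℕ) (P Q : Nat.Partition n), (∀ j ∈ P.parts, Nat.Prime j) →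
      (∀ j ∈ Q.parts, Nat.Prime j) → P ≠ Q →
      factorialProd P.parts ≠ factorialProd Q.parts) := by
  refine ⟨fun A B => fp_inj _ A B rfl, fun n P Q hP hQ hne h => hne ?_⟩
  exact Nat.Partition.ext (fp_inj _ _ _ rfl hP hQ h)
end

section
/- For every natural number n ≥ 7, M(n) + p(n−7) ≤ p(n). -/
/-- `M n`: the number of distinct multinomial coefficients with upper entry `n`, i.e. the
number of distinct values of `∏_{j ∈ λ} j!` as `λ` ranges over the partitions of `n`. -/
noncomputable def M (n : ℕ) : ℕ :=
  Set.ncard {v : ℕ | ∃ P : Nat.Partition n, factorialProd P.parts = v}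

/-- `numPartitions n`: the number of partitions of `n`. -/
noncomputable def numPartitions (n : ℕ) : ℕ := Fintype.card (Nat.Partition n)

theorem exists_reduced (n : ℕ) : ∀ (k : ℕ) (P : Nat.Partition n), P.parts.count 2 = k →
    ∃ Q : Nat.Partition n, ¬ (({3, 2, 2} : Multiset ℕ) ≤ Q.parts) ∧
      factorialProd Q.parts = factorialProd P.parts := by
  intro k
  induction k using Nat.strong_induction_on with
  | _ k ih =>
    intro P hk
    by_cases h : ({3, 2, 2} : Multiset ℕ) ≤ P.parts
    · obtain ⟨R, hR⟩ := Multiset.le_iff_exists_add.mp h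
      have hs := P.parts_sum
      have hpos := @P.parts_pos
      rw [hR] at hs hk
      have hcount : (({4, 1, 1, 1} : Multiset ℕ) + R).count 2 < k := by
        have h1 : ({4, 1, 1, 1} : Multiset ℕ).count 2 = 0 := by decide
        have h2 : ({3, 2, 2} : Multiset ℕ).count 2 = 2 := by decide
        rw [Multiset.count_add] at hk ⊢
        omega
      let P' : Nat.Partition n :=
        { parts := ({4, 1, 1, 1} : Multiset ℕ) + R
          parts_pos := by
            intro i hi
            rcases Multiset.mem_add.mp hi with hi | hi
            · simp at hi
              omega
            · exact hpos (by rw [hR]; exact Multiset.mem_add.mpr (Or.inr hi))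
          parts_sum := by
            rw [← hs]
            simp
            omega }
      obtain ⟨Q, hQ, hQ'⟩ := ih _ hcount P' rfl
      refine ⟨Q, hQ, hQ'.trans ?_⟩
      show factorialProd (({4, 1, 1, 1} : Multiset ℕ) + R) = _
      rw [hR]
      simp [factorialProd, Nat.factorial]
      ring
    · exact ⟨P, h, rfl⟩

/-- For every `n ≥ 7`, `M(n) + p(n − 7) ≤ p(n)`. -/
theorem M_add_p_sub_seven_le (n : ℕ) (hn : 7 ≤ n) :
    M n + numPartitions (n - 7) ≤ numPartitions n := by
  classical
  let p : Nat.Partition n → Prop := fun Q => ({3, 2, 2} : Multiset ℕ) ≤ Q.parts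
  have h1 : M n ≤ (Finset.univ.filter (fun Q => ¬ p Q)).card := by
    have hsub : {v : ℕ | ∃ P : Nat.Partition n, factorialProd P.parts = v} ⊆
        (((Finset.univ.filter (fun Q => ¬ p Q)).image
          (fun Q : Nat.Partition n => factorialProd Q.parts) : Finset ℕ) : Set ℕ) := by
      rintro v ⟨P, rfl⟩
      obtain ⟨Q, hQ, hQ'⟩ := exists_reduced n _ P rfl
      simp only [Finset.coe_image, Set.mem_image, Finset.mem_coe, Finset.mem_filter]
      exact ⟨Q, ⟨Finset.mem_univ _, hQ⟩, hQ'⟩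
    have := Set.ncard_le_ncard hsub (Finset.finite_toSet _)
    rw [Set.ncard_coe_finset] at this
    exact this.trans Finset.card_image_le
  have h2 : numPartitions (n - 7) ≤ (Finset.univ.filter p).card := by
    let f : Nat.Partition (n - 7) → Nat.Partition n := fun P =>
      { parts := ({3, 2, 2} : Multiset ℕ) + P.parts
        parts_pos := by
          intro i hi
          rcases Multiset.mem_add.mp hi with hi | hi
          · simp at hi
            omega
          · exact P.parts_pos hi
        parts_sum := by
          rw [Multiset.sum_add, P.parts_sum]
          simp
          omega }
    refine Finset.card_le_card_of_injOn (s := Finset.univ) f ?_ ?_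
    · intro P _
      simp only [Finset.coe_filter, Set.mem_ofPred_eq]
      exact ⟨Finset.mem_univ _, Multiset.le_add_right _ _⟩
    · intro P _ Q _ h
      have h' : ({3, 2, 2} : Multiset ℕ) + P.parts = ({3, 2, 2} : Multiset ℕ) + Q.parts :=
        congrArg Nat.Partition.parts h
      exact Nat.Partition.ext (add_left_cancel h')
  have h3 := Finset.card_filter_add_card_filter_not (s := (Finset.univ : Finset (Nat.Partition n))) p
  have h4 : numPartitions n = (Finset.univ : Finset (Nat.Partition n)).card := rfl
  omega
end

section
/- For every natural number n ≥ 13, M(n) + p(n−7) + p(n−8) + p(n−10) ≤ p(n) + p(n−12) + p(n−13). -/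
open Finset in
theorem card_filter_le (n : ℕ) (s : Multiset ℕ) (hs : ∀ i ∈ s, 0 < i) (h : s.sum ≤ n) :
    #{P : Nat.Partition n | s ≤ P.parts} = numPartitions (n - s.sum) := by
  rw [numPartitions, ← Finset.card_univ]
  symm
  refine Finset.card_bij (fun Q _ => (⟨s + Q.parts, ?_, ?_⟩ : Nat.Partition n)) ?_ ?_ ?_
  · intro i hi
    rcases Multiset.mem_add.1 hi with hi | hi
    · exact hs i hi
    · exact Q.parts_pos hi
  · rw [Multiset.sum_add, Q.parts_sum]; omega
  · intro Q _
    simp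
  · intro Q _ R _ hQR
    have := congrArg Nat.Partition.parts hQR
    exact Nat.Partition.ext (add_left_cancel this)
  · intro P hP
    obtain ⟨u, hu⟩ := Multiset.le_iff_exists_add.1 (Finset.mem_filter.1 hP).2
    have h1 := P.parts_sum
    rw [hu, Multiset.sum_add] at h1
    refine ⟨⟨u, fun {i} hi => P.parts_pos (by rw [hu]; exact Multiset.mem_add.2 (Or.inr hi)),
      by omega⟩, Finset.mem_univ _, ?_⟩
    exact Nat.Partition.ext hu.symm

theorem not_le_of_max {n : ℕ} (P : Nat.Partition n)
    (hP : ∀ Q : Nat.Partition n, factorialProd Q.parts = factorialProd P.parts →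
      Q.parts.count 1 ≤ P.parts.count 1)
    (s t : Multiset ℕ) (ht : ∀ i ∈ t, 0 < i) (hst : s.sum = t.sum)
    (hf : factorialProd s = factorialProd t) (hc : s.count 1 < t.count 1) : ¬ s ≤ P.parts := by
  intro hle
  obtain ⟨u, hu⟩ := Multiset.le_iff_exists_add.1 hle
  have h1 := P.parts_sum
  rw [hu, Multiset.sum_add] at h1
  have := hP ⟨t + u, fun {i} hi => by
      rcases Multiset.mem_add.1 hi with hi | hi
      · exact ht i hi
      · exact P.parts_pos (by rw [hu]; exact Multiset.mem_add.2 (Or.inr hi)),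
    by rw [Multiset.sum_add]; omega⟩ (by
      have h3 := congrArg factorialProd hu
      rw [h3]
      simp only [factorialProd, Multiset.map_add, Multiset.prod_add] at hf ⊢
      rw [hf])
  have h2 := congrArg (Multiset.count 1) hu
  simp only [Multiset.count_add] at this h2
  omega

open Finset in
theorem M_le_good (n : ℕ) :
    M n ≤ #{P : Nat.Partition n | ¬ (({3,2,2} : Multiset ℕ) ≤ P.parts ∨
      ({5,3} : Multiset ℕ) ≤ P.parts ∨ ({6,2,2} : Multiset ℕ) ≤ P.parts)} := by
  classical
  rw [M]
  refine le_trans (Set.ncard_le_ncard (t := ((Finset.image (fun P : Nat.Partition n =>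
    factorialProd P.parts) {P : Nat.Partition n | ¬ (({3,2,2} : Multiset ℕ) ≤ P.parts ∨
      ({5,3} : Multiset ℕ) ≤ P.parts ∨ ({6,2,2} : Multiset ℕ) ≤ P.parts)} : Finset ℕ) : Set ℕ))
      ?_ (Finset.finite_toSet _)) ?_
  · rintro v ⟨P₀, hP₀⟩
    obtain ⟨P, hP, hmax⟩ := Finset.exists_max_image
      ({P : Nat.Partition n | factorialProd P.parts = v} : Finset _)
      (fun P => P.parts.count 1) ⟨P₀, by simpa using hP₀⟩
    simp only [Finset.mem_filter, Finset.mem_univ, true_and] at hP hmax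
    have key := not_le_of_max P (fun Q hQ => hmax Q (hQ.trans hP))
    rw [Finset.mem_coe, Finset.mem_image]
    refine ⟨P, ?_, hP⟩
    rw [Finset.mem_filter]
    refine ⟨Finset.mem_univ _, ?_⟩
    rintro (h | h | h)
    · exact key _ {4,1,1,1} (by decide) (by decide) (by decide) (by decide) h
    · exact key _ {6,1,1} (by decide) (by decide) (by decide) (by decide) h
    · exact key _ {5,4,1} (by decide) (by decide) (by simp [factorialProd, Nat.factorial])
        (by decide) h
  · rw [Set.ncard_coe_finset]
    exact Finset.card_image_le

open Finset in
theorem M_upper_bound_six (n : ℕ) (hn : 13 ≤ n) :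
    M n + numPartitions (n - 7) + numPartitions (n - 8) + numPartitions (n - 10) ≤
      numPartitions n + numPartitions (n - 12) + numPartitions (n - 13) := by
  classical
  have hM := M_le_good n
  have hA := card_filter_le n {3,2,2} (by decide) (by simp; omega)
  have hB := card_filter_le n {5,3} (by decide) (by simp; omega)
  have hC := card_filter_le n {6,2,2} (by decide) (by simp; omega)
  have hAB := card_filter_le n {5,3,2,2} (by decide) (by simp; omega)
  have hAC := card_filter_le n {6,3,2,2} (by decide) (by simp; omega)
  have eAB : ∀ m : Multiset ℕ, {5,3,2,2} ≤ m ↔ {3,2,2} ≤ m ∧ {5,3} ≤ m := by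
    intro m
    rw [← Multiset.union_le_iff]
    have : ({3,2,2} : Multiset ℕ) ∪ {5,3} = {5,3,2,2} := by decide
    rw [this]
  have eAC : ∀ m : Multiset ℕ, {6,3,2,2} ≤ m ↔ {3,2,2} ≤ m ∧ {6,2,2} ≤ m := by
    intro m
    rw [← Multiset.union_le_iff]
    have : ({3,2,2} : Multiset ℕ) ∪ {6,2,2} = {6,3,2,2} := by decide
    rw [this]
  have eBC : ∀ m : Multiset ℕ, {5,3} ≤ m → {6,2,2} ≤ m → {3,2,2} ≤ m := by
    intro m h1 h2
    have : ({3,2,2} : Multiset ℕ) ≤ {5,3} ∪ {6,2,2} := by decide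
    exact this.trans (Multiset.union_le_iff.2 ⟨h1, h2⟩)
  rw [show ({3,2,2} : Multiset ℕ).sum = 7 by decide] at hA
  rw [show ({5,3} : Multiset ℕ).sum = 8 by decide] at hB
  rw [show ({6,2,2} : Multiset ℕ).sum = 10 by decide] at hC
  rw [show ({5,3,2,2} : Multiset ℕ).sum = 12 by decide] at hAB
  rw [show ({6,3,2,2} : Multiset ℕ).sum = 13 by decide] at hAC
  rw [← hA, ← hB, ← hC, ← hAB, ← hAC]
  refine le_trans (Nat.add_le_add_right (Nat.add_le_add_right (Nat.add_le_add_right hM _) _) _) ?_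
  rw [numPartitions, ← Finset.card_univ, Finset.card_eq_sum_ones Finset.univ]
  simp only [Finset.card_filter, ← Finset.sum_add_distrib]
  refine Finset.sum_le_sum fun P _ => ?_
  have := eBC P.parts
  simp only [eAB, eAC]
  clear hM hA hB hC hAB hAC eAB eAC eBC
  by_cases a : ({3,2,2} : Multiset ℕ) ≤ P.parts <;> by_cases b : ({5,3} : Multiset ℕ) ≤ P.parts <;>
    by_cases c : ({6,2,2} : Multiset ℕ) ≤ P.parts <;> simp_all
end

section
/- The sequence of real numbers M(n)/p(n) tends to 0 as n tends to infinity; that is, M(n) = o(p(n)). -/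
open Multiset in
theorem aux_replace (n : ℕ) : ∀ (k : ℕ) (P : Nat.Partition n), Multiset.card P.parts = k →
    ∃ P' : Nat.Partition n, ¬ ({4,1,1,1} : Multiset ℕ) ≤ P'.parts ∧
      factorialProd P'.parts = factorialProd P.parts := by
  intro k
  induction k using Nat.strong_induction_on with
  | _ k ih =>
    intro P hP
    by_cases h : ({4,1,1,1} : Multiset ℕ) ≤ P.parts
    · obtain ⟨u, hu⟩ := Multiset.le_iff_exists_add.1 h
      have hs := P.parts_sum
      have hpos : ∀ i ∈ u, 0 < i := fun i hi => P.parts_pos (by rw [hu]; simp [hi])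
      rw [hu] at hs hP
      simp at hs hP
      obtain ⟨P', h1, h2⟩ := ih (Multiset.card ({2,2,3} + u : Multiset ℕ)) (by simp; omega)
        ⟨{2,2,3} + u, by
          intro i hi
          simp at hi
          rcases hi with rfl | rfl | hi
          · norm_num
          · norm_num
          · exact hpos i hi, by simp; omega⟩ rfl
      refine ⟨P', h1, h2.trans ?_⟩
      rw [hu]
      simp [factorialProd, Nat.factorial]
      ring
    · exact ⟨P, h, rfl⟩

theorem aux_A (n : ℕ) : M (n+7) + numPartitions n ≤ numPartitions (n+7) := by
  classical
  unfold numPartitions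
  rw [← Finset.card_univ (α := Nat.Partition (n+7)), ← Finset.card_filter_add_card_filter_not
    (s := (Finset.univ : Finset (Nat.Partition (n+7))))
    (fun P => ¬ ({4,1,1,1} : Multiset ℕ) ≤ P.parts)]
  apply Nat.add_le_add
  · unfold M
    have : {v : ℕ | ∃ P : Nat.Partition (n+7), factorialProd P.parts = v} ⊆
      (((Finset.univ.filter (fun P : Nat.Partition (n+7) =>
        ¬ ({4,1,1,1} : Multiset ℕ) ≤ P.parts)).image (fun P => factorialProd P.parts) : Finset ℕ)
          : Set ℕ) := by
      rintro v ⟨P, rfl⟩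
      obtain ⟨P', h1, h2⟩ := aux_replace (n+7) _ P rfl
      simp only [Finset.coe_image, Set.mem_image, Finset.mem_coe, Finset.mem_filter]
      exact ⟨P', ⟨Finset.mem_univ _, h1⟩, h2⟩
    refine (Set.ncard_le_ncard this (Finset.finite_toSet _)).trans ?_
    rw [Set.ncard_coe_finset]
    exact Finset.card_image_le
  · rw [← Finset.card_univ]
    refine Finset.card_le_card_of_injOn (fun P => ⟨{4,1,1,1} + P.parts, ?_, ?_⟩) ?_ ?_
    · intro i hi
      rw [Multiset.mem_add] at hi
      rcases hi with hi | hi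
      · simp at hi
        omega
      · exact P.parts_pos hi
    · rw [Multiset.sum_add, P.parts_sum]
      simp; omega
    · intro P _
      simp only [Finset.coe_filter, Set.mem_ofPred_eq, not_not]
      exact ⟨Finset.mem_univ _, Multiset.le_add_right _ _⟩
    · intro P _ P' _ h
      simp only [Nat.Partition.mk.injEq] at h
      exact Nat.Partition.ext (add_left_cancel h)

def QQ (n : ℕ) : Finset (Nat.Partition n) := Finset.univ.filter (fun P => 1 ∉ P.parts)

theorem aux_B (n : ℕ) : numPartitions (n+1) ≤ numPartitions n + (QQ (n+1)).card := by
  classical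
  unfold numPartitions QQ
  rw [← Finset.card_univ (α := Nat.Partition (n+1)), ← Finset.card_filter_add_card_filter_not
    (s := (Finset.univ : Finset (Nat.Partition (n+1)))) (fun P => 1 ∈ P.parts)]
  apply Nat.add_le_add_right
  have : (Finset.univ.filter (fun P : Nat.Partition (n+1) => 1 ∈ P.parts)) ⊆
      Finset.univ.image (fun P : Nat.Partition n => (⟨1 ::ₘ P.parts, by
        intro i hi
        rw [Multiset.mem_cons] at hi
        rcases hi with rfl | hi
        · norm_num
        · exact P.parts_pos hi, by simp [P.parts_sum]; omega⟩ : Nat.Partition (n+1))) := by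
    intro P hP
    simp only [Finset.mem_filter] at hP
    obtain ⟨u, hu⟩ := Multiset.exists_cons_of_mem hP.2
    simp only [Finset.mem_image]
    have hs := P.parts_sum
    rw [hu] at hs
    simp at hs
    refine ⟨⟨u, fun {i} hi => P.parts_pos (by rw [hu]; simp [hi]), by omega⟩,
      Finset.mem_univ _, Nat.Partition.ext hu.symm⟩
  exact (Finset.card_le_card this).trans (Finset.card_image_le.trans (by rw [Finset.card_univ]))

theorem aux_mono (n : ℕ) : numPartitions n ≤ numPartitions (n+1) := by
  refine Fintype.card_le_of_injective (fun P => ⟨1 ::ₘ P.parts, ?_, ?_⟩) ?_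
  · intro i hi
    rw [Multiset.mem_cons] at hi
    rcases hi with rfl | hi
    · norm_num
    · exact P.parts_pos hi
  · simp [P.parts_sum]; omega
  · intro P P' h
    simp only [Nat.Partition.mk.injEq, Multiset.cons_inj_right] at h
    exact Nat.Partition.ext h

theorem aux_C (n : ℕ) : ∑ P ∈ QQ n, P.parts.toFinset.card ≤ numPartitions n := by
  classical
  rw [← Finset.card_sigma]
  unfold numPartitions
  rw [← Finset.card_univ]
  let f : (Σ _ : Nat.Partition n, ℕ) → Multiset ℕ := fun x =>
    x.1.parts.erase x.2 + Multiset.replicate x.2 1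
  rw [← Finset.card_image_of_injOn (f := f)
    (s := (QQ n).sigma fun P => P.parts.toFinset)]
  · have hsub : ((QQ n).sigma fun P => P.parts.toFinset).image f ⊆
        (Finset.univ : Finset (Nat.Partition n)).image (fun P => P.parts) := by
      intro s hs
      simp only [Finset.mem_image] at hs
      obtain ⟨⟨P, j⟩, hx, rfl⟩ := hs
      simp only [Finset.mem_sigma, Multiset.mem_toFinset] at hx
      simp only [Finset.mem_image]
      refine ⟨⟨f ⟨P, j⟩, ?_, ?_⟩, Finset.mem_univ _, rfl⟩
      · intro i hi
        simp only [f, Multiset.mem_add] at hi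
        rcases hi with hi | hi
        · exact P.parts_pos (Multiset.mem_of_mem_erase hi)
        · rw [Multiset.eq_of_mem_replicate hi]; norm_num
      · have := Multiset.sum_erase hx.2
        have h2 := P.parts_sum
        simp [f]; omega
    exact (Finset.card_le_card hsub).trans Finset.card_image_le
  · rintro ⟨P, j⟩ hx ⟨P', j'⟩ hx' h
    simp only [Finset.coe_sigma, Set.mem_sigma_iff, Finset.mem_coe, Multiset.mem_toFinset, QQ,
      Finset.mem_filter] at hx hx'
    have key : ∀ (R : Nat.Partition n) (i : ℕ), 1 ∉ R.parts → (f ⟨R, i⟩).count 1 = i := by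
      intro R i hR
      simp only [f, Multiset.count_add, Multiset.count_replicate_self]
      rw [Multiset.count_eq_zero_of_notMem (fun h => hR (Multiset.mem_of_mem_erase h))]
      omega
    have hj : j = j' := by
      rw [← key P j hx.1.2, ← key P' j' hx'.1.2, h]
    subst hj
    simp only [f] at h
    have h3 := add_right_cancel h
    have : P = P' := Nat.Partition.ext (by
      rw [← Multiset.cons_erase hx.2, ← Multiset.cons_erase hx'.2, h3])
    rw [this]

theorem aux_D (n D : ℕ) : ∃ S : Finset (Multiset ℕ), S.card ≤ ((n+1)^2)^D ∧
    ∀ s : Multiset ℕ, s.toFinset.card ≤ D → (∀ i ∈ s, i ≤ n) → Multiset.card s ≤ n → s ∈ S := by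
  classical
  induction D with
  | zero =>
    refine ⟨{0}, by simp, ?_⟩
    intro s hs _ _
    simpa using hs
  | succ D ih =>
    obtain ⟨S, hS, h⟩ := ih
    refine ⟨(S ×ˢ (Finset.range (n+1) ×ˢ Finset.range (n+1))).image
      (fun x => x.1 + Multiset.replicate x.2.1 x.2.2), ?_, ?_⟩
    · refine Finset.card_image_le.trans ?_
      simp only [Finset.card_product, Finset.card_range]
      rw [pow_succ, ← sq]
      gcongr
    · intro s hs h1 h2
      simp only [Finset.mem_image, Finset.mem_product, Finset.mem_range]
      rcases s.empty_or_exists_mem with rfl | ⟨a, ha⟩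
      · exact ⟨(0, 0, 0), ⟨h 0 (by simp) (by simp) (by simp), by simp, by simp⟩, by simp⟩
      · refine ⟨(s.filter (· ≠ a), s.count a, a), ⟨h _ ?_ ?_ ?_, ?_, ?_⟩, ?_⟩
        · have : (s.filter (· ≠ a)).toFinset ⊆ s.toFinset.erase a := by
            intro x hx
            simp at hx ⊢
            exact ⟨hx.2, hx.1⟩
          have h4 := Finset.card_le_card this
          rw [Finset.card_erase_of_mem (by simpa using ha)] at h4
          show (s.filter (· ≠ a)).toFinset.card ≤ D
          omega
        · intro i hi
          exact h1 i (Multiset.mem_of_mem_filter hi)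
        · exact (Multiset.card_le_card (Multiset.filter_le _ _)).trans h2
        · have := Multiset.count_le_card a s
          show s.count a < n + 1
          omega
        · have := h1 a ha
          show a < n + 1
          omega
        · show s.filter (· ≠ a) + Multiset.replicate (s.count a) a = s
          rw [← Multiset.filter_eq', add_comm]
          exact Multiset.filter_add_not (· = a) s

theorem aux_D' (n D : ℕ) : ((QQ n).filter (fun P => P.parts.toFinset.card ≤ D)).card
    ≤ ((n+1)^2)^D := by
  obtain ⟨S, hS, h⟩ := aux_D n D
  refine le_trans (Finset.card_le_card_of_injOn (fun P => P.parts) ?_ ?_) hS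
  · intro P hP
    simp only [Finset.coe_filter, Set.mem_ofPred_eq] at hP
    refine h _ hP.2 (fun i hi => Nat.Partition.le_of_mem_parts hi) ?_
    have h1 : Multiset.card P.parts • 1 ≤ P.parts.sum :=
      Multiset.card_nsmul_le_sum (fun i hi => P.parts_pos hi)
    rw [P.parts_sum] at h1
    simpa using h1
  · intro P _ P' _ h
    exact Nat.Partition.ext h

theorem aux_E (n k : ℕ) (h : (k+1)^2 ≤ n) : 2^k ≤ numPartitions n := by
  classical
  have hc : (Finset.Icc 2 (k+1)).powerset.card = 2^k := by simp
  rw [← hc]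
  unfold numPartitions
  rw [← Finset.card_univ]
  let f : Finset ℕ → Multiset ℕ := fun s => s.val + Multiset.replicate (n - s.val.sum) 1
  rw [← Finset.card_image_of_injOn (f := f) (s := (Finset.Icc 2 (k+1)).powerset)]
  · have hsub : ((Finset.Icc 2 (k+1)).powerset).image f ⊆
        (Finset.univ : Finset (Nat.Partition n)).image (fun P => P.parts) := by
      intro s hs
      simp only [Finset.mem_image, Finset.mem_powerset] at hs
      obtain ⟨t, ht, rfl⟩ := hs
      simp only [Finset.mem_image]
      refine ⟨⟨f t, ?_, ?_⟩, Finset.mem_univ _, rfl⟩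
      · intro i hi
        simp only [f, Multiset.mem_add] at hi
        rcases hi with hi | hi
        · have := Finset.mem_Icc.1 (ht (Finset.mem_def.2 hi))
          omega
        · rw [Multiset.eq_of_mem_replicate hi]; norm_num
      · have h1 : t.val.sum ≤ Multiset.card t.val • (k+1) :=
          Multiset.sum_le_card_nsmul _ _ (fun i hi =>
            (Finset.mem_Icc.1 (ht (Finset.mem_def.2 hi))).2)
        have h2 : t.card ≤ k := by simpa using Finset.card_le_card ht
        have h3 : t.val.sum ≤ n := by
          refine h1.trans (le_trans ?_ h)
          rw [Finset.card_val, smul_eq_mul]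
          nlinarith
        simp only [f, Multiset.sum_add, Multiset.sum_replicate, smul_eq_mul]
        omega
    exact (Finset.card_le_card hsub).trans Finset.card_image_le
  · intro s hs t ht hst
    simp only [Finset.coe_powerset, Set.mem_preimage, Set.mem_powerset_iff, Finset.coe_subset]
      at hs ht
    ext i
    by_cases hi : i = 1
    · subst hi
      constructor
      · intro h; have := Finset.mem_Icc.1 (hs h); omega
      · intro h; have := Finset.mem_Icc.1 (ht h); omega
    · have key : ∀ u : Finset ℕ, i ∈ f u ↔ i ∈ u := by
        intro u
        simp [f, Multiset.mem_replicate, hi]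
      rw [← key s, ← key t, hst]

theorem aux_F (n D : ℕ) : D * (QQ n).card ≤ numPartitions n + D * ((n+1)^2)^D := by
  classical
  rw [← Finset.card_filter_add_card_filter_not (s := QQ n)
    (fun P => P.parts.toFinset.card ≤ D)]
  have h1 := aux_D' n D
  have h2 : D * ((QQ n).filter (fun P => ¬ P.parts.toFinset.card ≤ D)).card ≤ numPartitions n := by
    refine le_trans ?_ (aux_C n)
    refine le_trans ?_ (Finset.sum_le_sum_of_subset (Finset.filter_subset
      (fun P => ¬ P.parts.toFinset.card ≤ D) (QQ n)))
    rw [mul_comm, ← smul_eq_mul]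
    apply Finset.card_nsmul_le_sum
    intro P hP
    have := (Finset.mem_filter.1 hP).2
    omega
  rw [mul_add]
  have := Nat.mul_le_mul_left D h1
  omega

theorem aux_G (D : ℕ) : ∀ᶠ m : ℕ in Filter.atTop, 4 * D * m^(4*D) ≤ 2^m := by
  have h := tendsto_pow_const_div_const_pow_of_one_lt (4*D) (r := 2) (by norm_num)
  have hpos : (0:ℝ) < 1 / (4*D+1) := by positivity
  filter_upwards [h.eventually_lt_const hpos] with m hm
  rw [div_lt_div_iff₀ (by positivity) (by positivity)] at hm
  have h2 : ((4 * D * m^(4*D) : ℕ) : ℝ) ≤ ((2^m : ℕ) : ℝ) := by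
    push_cast
    have : (0:ℝ) ≤ (m:ℝ)^(4*D) := by positivity
    nlinarith
  exact_mod_cast h2

theorem aux_H (D : ℕ) : ∀ᶠ n : ℕ in Filter.atTop, D * ((n+1)^2)^D ≤ numPartitions n := by
  obtain ⟨N, hN⟩ := Filter.eventually_atTop.1 (aux_G D)
  filter_upwards [Filter.eventually_ge_atTop ((N+1)^2)] with n hn
  have hs : N + 1 ≤ Nat.sqrt n := Nat.le_sqrt'.2 hn
  obtain ⟨k, hk⟩ : ∃ k, Nat.sqrt n = k + 1 := ⟨Nat.sqrt n - 1, by omega⟩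
  have h1 : (k+1)^2 ≤ n := by rw [← hk]; exact Nat.sqrt_le' n
  have h2 : n + 1 ≤ (k+2)^2 := by
    have := Nat.lt_succ_sqrt' n
    rw [hk] at this
    exact this
  have h3 := hN (k+2) (by omega)
  refine le_trans ?_ (aux_E n k h1)
  have h4 : ((n+1)^2)^D ≤ (k+2)^(4*D) := by
    calc ((n+1)^2)^D ≤ (((k+2)^2)^2)^D := by gcongr
      _ = (k+2)^(4*D) := by rw [← pow_mul, ← pow_mul]; congr 1; ring
  have h5 := Nat.mul_le_mul_left D h4
  have h6 : 2^(k+2) = 4 * 2^k := by ring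
  rw [h6, mul_assoc] at h3
  omega

theorem aux_I (D : ℕ) : ∀ᶠ n : ℕ in Filter.atTop,
    D * M (n+7) ≤ 14 * numPartitions (n+7) := by
  obtain ⟨N, hN⟩ := Filter.eventually_atTop.1 (aux_H D)
  filter_upwards [Filter.eventually_ge_atTop N] with n hn
  have step : ∀ m, N ≤ m → D * numPartitions (m+1) ≤
      D * numPartitions m + 2 * numPartitions (m+1) := by
    intro m hm
    have h1 := Nat.mul_le_mul_left D (aux_B m)
    have h2 := aux_F (m+1) D
    have h3 := hN (m+1) (by omega)
    rw [mul_add] at h1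
    omega
  have hA := Nat.mul_le_mul_left D (aux_A n)
  rw [mul_add] at hA
  have s0 := step n (by omega)
  have s1 := step (n+1) (by omega)
  have s2 := step (n+2) (by omega)
  have s3 := step (n+3) (by omega)
  have s4 := step (n+4) (by omega)
  have s5 := step (n+5) (by omega)
  have s6 := step (n+6) (by omega)
  have m1 := aux_mono (n+1)
  have m2 := aux_mono (n+2)
  have m3 := aux_mono (n+3)
  have m4 := aux_mono (n+4)
  have m5 := aux_mono (n+5)
  have m6 := aux_mono (n+6)
  simp only [Nat.add_assoc, Nat.reduceAdd] at *
  omega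

/-- `M(n)/p(n) → 0` as `n → ∞`, i.e. `M(n) = o(p(n))`. -/
theorem M_div_p_tendsto_zero :
    Filter.Tendsto (fun n : ℕ => (M n : ℝ) / (numPartitions n : ℝ))
      Filter.atTop (nhds 0) := by
  rw [← Filter.tendsto_add_atTop_iff_nat 7]
  rw [Metric.tendsto_nhds]
  intro ε hε
  obtain ⟨D, hD⟩ := exists_nat_gt (14 / ε)
  filter_upwards [aux_I D] with n hn
  have hp : 0 < numPartitions (n+7) := Fintype.card_pos
  have hp' : (0:ℝ) < numPartitions (n+7) := by exact_mod_cast hp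
  have hn' : (D:ℝ) * M (n+7) ≤ 14 * numPartitions (n+7) := by exact_mod_cast hn
  rw [Real.dist_eq, sub_zero, abs_of_nonneg (by positivity), div_lt_iff₀ hp']
  rw [div_lt_iff₀ hε] at hD
  have hD0 : (0:ℝ) < D := by
    by_contra h
    have : (D:ℝ) * ε ≤ 0 := mul_nonpos_of_nonpos_of_nonneg (not_lt.1 h) hε.le
    linarith
  have : (D:ℝ) * M (n+7) < D * (ε * numPartitions (n+7)) := by
    have := mul_lt_mul_of_pos_right hD hp'
    linarith
  exact lt_of_mul_lt_mul_left this hD0.le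
end

section
/- The sequence of real numbers p(n−7)/p(n) tends to 1 as n tends to infinity. -/
lemma aux_p_pos (n : ℕ) : 0 < numPartitions n := Fintype.card_pos

lemma aux_step (n : ℕ) : numPartitions (n+1) =
    numPartitions n + (Finset.univ.filter (fun l : Nat.Partition (n+1) => 1 ∉ l.parts)).card := by
  have h := Fintype.card_congr
    (Nat.Partition.partitionWithPartEquiv (n := n+1) (a := 1) le_rfl (by omega))
  have h2 := Finset.card_filter_add_card_filter_not
    (s := (Finset.univ : Finset (Nat.Partition (n+1)))) (fun l => 1 ∈ l.parts)
  rw [Fintype.card_subtype] at h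
  have h3 : numPartitions (n+1) = (Finset.univ : Finset (Nat.Partition (n+1))).card := rfl
  have h4 : numPartitions n = Fintype.card (Nat.Partition (n+1-1)) := rfl
  rw [h3, h4, ← h, ← h2]

lemma aux_sigma (n : ℕ) :
    ∑ l ∈ Finset.univ.filter (fun l : Nat.Partition n => 1 ∉ l.parts), l.parts.toFinset.card
      ≤ numPartitions n := by
  rw [← Finset.card_sigma]
  let s := (Finset.univ.filter (fun l : Nat.Partition n => 1 ∉ l.parts)).sigma
    (fun l => l.parts.toFinset)
  have key : ∀ x ∈ s, ∃ m : Nat.Partition n,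
      m.parts = x.1.parts.erase x.2 + Multiset.replicate x.2 1 := by
    rintro ⟨l, a⟩ hx
    simp only [s, Finset.mem_sigma, Finset.mem_filter, Multiset.mem_toFinset] at hx
    refine ⟨⟨l.parts.erase a + Multiset.replicate a 1, ?_, ?_⟩, rfl⟩
    · intro i hi
      rw [Multiset.mem_add] at hi
      rcases hi with hi | hi
      · exact l.parts_pos (Multiset.mem_of_mem_erase hi)
      · rw [Multiset.eq_of_mem_replicate hi]; norm_num
    · have := Multiset.sum_erase hx.2
      rw [l.parts_sum] at this
      simp [← this, add_comm]
  choose! f hf using key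
  refine (Finset.card_le_card_of_injOn f (t := Finset.univ) (by simp) ?_).trans_eq rfl
  rintro ⟨l, a⟩ hx ⟨m, b⟩ hy hxy
  have h1 := hf _ hx
  have h2 := hf _ hy
  rw [hxy, h2] at h1
  simp only [Finset.coe_sigma, s, Set.mem_sigma_iff, Finset.mem_coe, Finset.mem_filter,
    Multiset.mem_toFinset] at hx hy
  dsimp only at h1
  have h3 := congrArg (Multiset.count 1) h1
  have e1 : (1 : ℕ) ∉ l.parts.erase a := fun h => hx.1.2 (Multiset.mem_of_mem_erase h)
  have e2 : (1 : ℕ) ∉ m.parts.erase b := fun h => hy.1.2 (Multiset.mem_of_mem_erase h)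
  rw [Multiset.count_add, Multiset.count_add, Multiset.count_eq_zero_of_notMem e1,
    Multiset.count_eq_zero_of_notMem e2] at h3
  simp at h3
  subst h3
  have h4 := add_right_cancel h1
  have h5 : l.parts = m.parts := by
    rw [← Multiset.cons_erase hx.2, ← h4, Multiset.cons_erase hy.2]
  have : l = m := Nat.Partition.ext h5
  subst this
  rfl

lemma aux_few (n K : ℕ) :
    (Finset.univ.filter (fun l : Nat.Partition n => l.parts.toFinset.card ≤ K)).card
      ≤ (n+1)^(2*K) := by
  let f : Nat.Partition n → (Fin K → Fin (n+1) × Fin (n+1)) := fun l i =>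
    (Fin.ofNat (n+1) (l.parts.toFinset.toList.getD i 0),
     Fin.ofNat (n+1) (l.parts.count (l.parts.toFinset.toList.getD i 0)))
  have hc : (Finset.univ : Finset (Fin K → Fin (n+1) × Fin (n+1))).card = (n+1)^(2*K) := by
    simp [pow_mul, sq]
  rw [← hc]
  have hle : ∀ (l : Nat.Partition n) (a : ℕ), l.parts.count a ≤ n := by
    intro l a
    refine (Multiset.count_le_card a _).trans ?_
    have := Multiset.card_nsmul_le_sum (s := l.parts) (a := 1) (fun x hx => l.parts_pos hx)
    simpa [l.parts_sum] using this
  have hle2 : ∀ (l : Nat.Partition n) (i : ℕ), l.parts.toFinset.toList.getD i 0 ≤ n := by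
    intro l i
    rw [List.getD_eq_getElem?_getD]
    by_cases h : i < l.parts.toFinset.toList.length
    · rw [List.getElem?_eq_getElem h]
      apply l.le_of_mem_parts
      rw [← Multiset.mem_toFinset, ← Finset.mem_toList]
      exact List.getElem_mem h
    · rw [List.getElem?_eq_none (by omega)]; simp
  have main : ∀ l m : Nat.Partition n, l.parts.toFinset.card ≤ K → f l = f m →
      ∀ a ∈ l.parts, l.parts.count a = m.parts.count a := by
    intro l m hl hlm a ha
    rw [← Multiset.mem_toFinset, ← Finset.mem_toList] at ha
    obtain ⟨i, hi, rfl⟩ := List.getElem_of_mem ha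
    have hiK : i < K := by rw [Finset.length_toList] at hi; omega
    have h := congrFun hlm ⟨i, hiK⟩
    simp only [f, Prod.mk.injEq, Fin.ext_iff, Fin.val_ofNat] at h
    rw [Nat.mod_eq_of_lt (Nat.lt_succ_of_le (hle2 _ _)),
      Nat.mod_eq_of_lt (Nat.lt_succ_of_le (hle2 _ _)),
      Nat.mod_eq_of_lt (Nat.lt_succ_of_le (hle _ _)),
      Nat.mod_eq_of_lt (Nat.lt_succ_of_le (hle _ _))] at h
    rw [← h.1] at h
    have := h.2
    rwa [List.getD_eq_getElem _ _ hi] at this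
  refine Finset.card_le_card_of_injOn f (by simp) ?_
  intro l hl m hm hlm
  simp at hl hm
  apply Nat.Partition.ext
  ext a
  by_cases h1 : a ∈ l.parts
  · exact main l m hl hlm a h1
  by_cases h2 : a ∈ m.parts
  · exact (main m l hm hlm.symm a h2).symm
  rw [Multiset.count_eq_zero_of_notMem h1, Multiset.count_eq_zero_of_notMem h2]

lemma aux_lower (n M t : ℕ) (h : t * (M * (M+2)) ≤ n) : (t+1)^M ≤ numPartitions n := by
  let g : (Fin M → Fin (t+1)) → Multiset ℕ := fun f =>
    ∑ i, Multiset.replicate (f i : ℕ) ((i : ℕ)+2)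
  have hg : ∀ f, (g f).sum ≤ n := by
    intro f
    refine le_trans ?_ h
    simp only [g, Multiset.sum_sum, Multiset.sum_replicate, smul_eq_mul]
    have : ∀ i ∈ (Finset.univ : Finset (Fin M)), (f i : ℕ) * ((i:ℕ)+2) ≤ t * (M+2) :=
      fun i _ => Nat.mul_le_mul (by omega) (by omega)
    refine (Finset.sum_le_card_nsmul _ _ _ this).trans_eq ?_
    simp; ring
  let F : (Fin M → Fin (t+1)) → Nat.Partition n := fun f =>
    Nat.Partition.ofSums n (g f + Multiset.replicate (n - (g f).sum) 1)
      (by have := hg f; simp; omega)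
  have hcount : ∀ f (j : Fin M), (F f).parts.count ((j:ℕ)+2) = f j := by
    intro f j
    simp only [F]
    rw [Nat.Partition.count_ofSums_of_ne_zero _ (by omega)]
    simp only [g, Multiset.count_add, Multiset.count_sum', Multiset.count_replicate]
    rw [Finset.sum_eq_single j]
    · simp
    · intro b _ hb
      rw [if_neg]
      intro h; apply hb; ext; omega
    · simp
  have inj : Function.Injective F := by
    intro f f' hff
    ext j
    rw [← hcount f j, hff, hcount]
  have := Fintype.card_le_of_injective F inj
  simpa [numPartitions] using this

lemma aux_bound (n K : ℕ) :
    K * (Finset.univ.filter (fun l : Nat.Partition n => 1 ∉ l.parts)).card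
      ≤ numPartitions n + K * (n+1)^(2*K) := by
  have h1 := aux_sigma n
  have h2 := aux_few n K
  set Q := Finset.univ.filter (fun l : Nat.Partition n => 1 ∉ l.parts)
  have h3 : ∑ l ∈ Q, K ≤ ∑ l ∈ Q, (l.parts.toFinset.card +
      if l.parts.toFinset.card ≤ K then K else 0) := by
    apply Finset.sum_le_sum
    intro l _
    split_ifs <;> omega
  rw [Finset.sum_add_distrib, ← Finset.sum_filter] at h3
  simp only [Finset.sum_const, smul_eq_mul] at h3
  have h4 : (Q.filter (fun l => l.parts.toFinset.card ≤ K)).card ≤ (n+1)^(2*K) :=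
    (Finset.card_le_card (Finset.filter_subset_filter _ (Finset.subset_univ _))).trans h2
  nlinarith

lemma aux_poly (K : ℕ) : ∃ D : ℕ, ∀ n, (n+1) * (n+1)^(2*K) ≤ D * numPartitions n := by
  set C := (2*K+1) * (2*K+1+2) with hC
  have hCpos : 0 < C := by positivity
  refine ⟨C^(2*K+1), fun n => ?_⟩
  have h := aux_lower n (2*K+1) (n / C) (Nat.div_mul_le_self n C)
  have h2 : n + 1 ≤ C * (n / C + 1) := Nat.lt_mul_div_succ n hCpos
  calc (n+1) * (n+1)^(2*K) = (n+1)^(2*K+1) := by ring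
    _ ≤ (C * (n / C + 1))^(2*K+1) := Nat.pow_le_pow_left h2 _
    _ = C^(2*K+1) * (n / C + 1)^(2*K+1) := mul_pow _ _ _
    _ ≤ _ := Nat.mul_le_mul_left _ h

lemma aux_one : Filter.Tendsto
    (fun n : ℕ => (numPartitions n : ℝ) / (numPartitions (n+1) : ℝ)) Filter.atTop (nhds 1) := by
  rw [Metric.tendsto_atTop]
  intro ε hε
  obtain ⟨K, hK⟩ := exists_nat_gt (2/ε)
  have hK0 : (0:ℝ) < K := lt_trans (by positivity) hK
  obtain ⟨D, hD⟩ := aux_poly K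
  obtain ⟨N, hN⟩ := exists_nat_gt (2 * D/ε)
  refine ⟨N, fun n hn => ?_⟩
  have hp : (0:ℝ) < numPartitions (n+1) := by exact_mod_cast aux_p_pos _
  have h1 := aux_step n
  have h2 := aux_bound (n+1) K
  have h3 := hD (n+1)
  set q := (Finset.univ.filter (fun l : Nat.Partition (n+1) => 1 ∉ l.parts)).card
  generalize (n+1+1)^(2*K) = w at h2 h3
  have h1' : (numPartitions (n+1) : ℝ) = numPartitions n + q := by exact_mod_cast h1
  have h2' : (K : ℝ) * q ≤ numPartitions (n+1) + K * w := by exact_mod_cast h2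
  have h3' : ((n:ℝ)+1+1) * w ≤ D * numPartitions (n+1) := by exact_mod_cast h3
  have hn' : (N:ℝ) ≤ n := by exact_mod_cast hn
  generalize (numPartitions (n+1) : ℝ) = P at *
  rw [Real.dist_eq, abs_sub_comm, abs_of_nonneg]
  · have e : 1 - (numPartitions n : ℝ) / P = q / P := by
      field_simp; linarith
    rw [e, div_lt_iff₀ hp]
    rw [div_lt_iff₀ hε] at hK hN
    have hw : (w:ℝ) * 2 ≤ ε * P := by
      have hn2 : (0:ℝ) < n+1+1 := by positivity
      have a : 2 * (D:ℝ) ≤ (n+1+1) * ε := by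
        have c := mul_le_mul_of_nonneg_right hn' hε.le
        linarith
      have b : (n+1+1) * ((w:ℝ) * 2) ≤ (n+1+1) * (ε * P) := by
        have c := mul_le_mul_of_nonneg_right a hp.le
        linarith
      exact le_of_mul_le_mul_left b hn2
    have : (K:ℝ) * q < K * (ε * P) := by
      have c := mul_lt_mul_of_pos_right hK hp
      have d := mul_le_mul_of_nonneg_left hw hK0.le
      linarith
    exact lt_of_mul_lt_mul_left this hK0.le
  · rw [sub_nonneg, div_le_one hp]
    have : (0:ℝ) ≤ q := by positivity
    linarith

/-- `p(n−7)/p(n) → 1` as `n → ∞`. -/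
theorem p_sub_seven_div_p_tendsto_one :
    Filter.Tendsto (fun n : ℕ => (numPartitions (n - 7) : ℝ) / (numPartitions n : ℝ))
      Filter.atTop (nhds 1) := by
  rw [← Filter.tendsto_add_atTop_iff_nat 7]
  have key : ∀ k : ℕ, Filter.Tendsto
      (fun n : ℕ => (numPartitions n : ℝ) / (numPartitions (n+k) : ℝ)) Filter.atTop (nhds 1) := by
    intro k
    induction k with
    | zero =>
      refine tendsto_const_nhds.congr fun n => ?_
      have hp : (0:ℝ) < numPartitions n := by exact_mod_cast aux_p_pos _
      simp [hp.ne']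
    | succ k ih =>
      have h := ih.mul ((Filter.tendsto_add_atTop_iff_nat k).2 aux_one)
      rw [one_mul] at h
      refine h.congr fun n => ?_
      have hp : (0:ℝ) < numPartitions (n+k) := by exact_mod_cast aux_p_pos _
      rw [div_mul_div_cancel₀ hp.ne', add_assoc]
  simpa using key 7
end

section
/- The sequence of real numbers p_ℙ(n)/A(n) tends to 0 as n tends to infinity, where A(n) = M_{{1}∪ℙ}(n) is the number of distinct multinomial coefficients with upper entry n all of whose lower entries are either 1 or prime. -/
/-- `MS S n`: the number of distinct multinomial coefficients with upper entry `n` and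
lower entries in `S`, i.e. the number of distinct values of `∏_{j ∈ λ} j!` as `λ` ranges
over the partitions of `n` with all parts in `S`. -/
noncomputable def MS (S : Set ℕ) (n : ℕ) : ℕ :=
  Set.ncard {v : ℕ | ∃ P : Nat.Partition n, (∀ j ∈ P.parts, j ∈ S) ∧ factorialProd P.parts = v}

/-- The set of primes. -/
def Primes : Set ℕ := {q | q.Prime}

/-- `pP n`: the number of partitions of `n` all of whose parts are prime. -/
noncomputable def pP (n : ℕ) : ℕ :=
  Set.ncard {P : Nat.Partition n | ∀ j ∈ P.parts, Nat.Prime j}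

theorem factorialProd_inj_aux (k : ℕ) : ∀ s t : Multiset ℕ, s.card = k →
    (∀ j ∈ s, Nat.Prime j) → (∀ j ∈ t, Nat.Prime j) →
    factorialProd s = factorialProd t → s = t := by
  have key : ∀ s t : Multiset ℕ, (∀ j ∈ s, Nat.Prime j) →
      factorialProd s = factorialProd t → ∀ p ∈ s, ∃ q ∈ t, p ≤ q := by
    intro s t hs h p hp
    have h1 : p ∣ factorialProd s :=
      (Nat.dvd_factorial (hs p hp).pos le_rfl).trans
        (Multiset.dvd_prod (Multiset.mem_map_of_mem _ hp))
    rw [h] at h1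
    unfold factorialProd at h1
    obtain ⟨q, hq, hpa⟩ := (hs p hp).prime.exists_mem_multiset_map_dvd h1
    exact ⟨q, hq, ((hs p hp).dvd_factorial).1 hpa⟩
  induction k with
  | zero =>
    intro s t hc hs ht h
    have h0 : s = 0 := Multiset.card_eq_zero.1 hc
    subst h0
    symm
    apply Multiset.eq_zero_of_forall_notMem
    intro a ha
    obtain ⟨q, hq, _⟩ := key t 0 ht h.symm a ha
    simp at hq
  | succ k ih =>
    intro s t hc hs ht h
    have hne : s.toFinset.Nonempty := by
      rw [Multiset.toFinset_nonempty]
      rintro rfl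
      simp at hc
    obtain ⟨p, hp, hmax⟩ := s.toFinset.exists_max_image id hne
    simp only [Multiset.mem_toFinset, id] at hp hmax
    obtain ⟨q, hq, hpq⟩ := key s t hs h p hp
    obtain ⟨r, hr, hqr⟩ := key t s ht h.symm q hq
    have hqp : q = p := le_antisymm (hqr.trans (hmax r hr)) hpq
    subst hqp
    obtain ⟨s', rfl⟩ := Multiset.exists_cons_of_mem hp
    obtain ⟨t', rfl⟩ := Multiset.exists_cons_of_mem hq
    congr 1
    apply ih
    · simpa using hc
    · exact fun j hj => hs j (Multiset.mem_cons_of_mem hj)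
    · exact fun j hj => ht j (Multiset.mem_cons_of_mem hj)
    · simp only [factorialProd, Multiset.map_cons, Multiset.prod_cons] at h ⊢
      exact Nat.eq_of_mul_eq_mul_left (Nat.factorial_pos q) h

/-- Multisets of primes with sum at most `n`. -/
def GG (n : ℕ) : Set (Multiset ℕ) := {s | (∀ j ∈ s, Nat.Prime j) ∧ s.sum ≤ n}

theorem GG_injOn (n : ℕ) : Set.InjOn factorialProd (GG n) := fun s hs t ht h =>
  factorialProd_inj_aux _ s t rfl hs.1 ht.1 h

theorem GG_image (n : ℕ) : factorialProd '' GG n ⊆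
    {v : ℕ | ∃ P : Nat.Partition n, (∀ j ∈ P.parts, j ∈ ({1} ∪ Primes : Set ℕ)) ∧
      factorialProd P.parts = v} := by
  rintro _ ⟨s, ⟨hs, hn⟩, rfl⟩
  refine ⟨⟨s + Multiset.replicate (n - s.sum) 1, ?_, ?_⟩, ?_, ?_⟩
  · intro i hi
    rcases Multiset.mem_add.1 hi with h | h
    · exact (hs i h).pos
    · rw [Multiset.eq_of_mem_replicate h]; exact one_pos
  · simp; omega
  · intro i hi
    rcases Multiset.mem_add.1 hi with h | h
    · exact Or.inr (hs i h)
    · exact Or.inl (Multiset.eq_of_mem_replicate h)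
  · simp [factorialProd]

theorem val_finite (S : Set ℕ) (n : ℕ) :
    {v : ℕ | ∃ P : Nat.Partition n, (∀ j ∈ P.parts, j ∈ S) ∧
      factorialProd P.parts = v}.Finite := by
  apply (Set.finite_range (fun P : Nat.Partition n => factorialProd P.parts)).subset
  rintro _ ⟨P, _, rfl⟩
  exact ⟨P, rfl⟩

theorem GG_finite (n : ℕ) : (GG n).Finite :=
  Set.Finite.of_finite_image ((val_finite _ n).subset (GG_image n)) (GG_injOn n)

theorem GG_le (n : ℕ) : (GG n).ncard ≤ MS ({1} ∪ Primes) n := by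
  rw [← (GG_injOn n).ncard_image]
  exact Set.ncard_le_ncard (GG_image n) (val_finite _ n)

/-- Multisets of primes with sum exactly `n`. -/
noncomputable def PF (n : ℕ) : Finset (Multiset ℕ) := by
  classical exact (GG_finite n).toFinset.filter (fun s => s.sum = n)

theorem mem_PF (n : ℕ) (s : Multiset ℕ) :
    s ∈ PF n ↔ (∀ j ∈ s, Nat.Prime j) ∧ s.sum = n := by
  classical
  simp only [PF, Finset.mem_filter, Set.Finite.mem_toFinset, GG, Set.mem_ofPred_eq]
  constructor
  · rintro ⟨⟨a, b⟩, c⟩; exact ⟨a, c⟩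
  · rintro ⟨a, c⟩; exact ⟨⟨a, c.le⟩, c⟩

theorem pP_le (n : ℕ) : pP n ≤ (PF n).card := by
  rw [← Set.ncard_coe_finset]
  apply Set.ncard_le_ncard_of_injOn (fun P : Nat.Partition n => P.parts)
  · intro P hP
    exact (mem_PF _ _).2 ⟨hP, P.parts_sum⟩
  · intro P _ Q _ h
    exact Nat.Partition.ext h

theorem few_bound (n K : ℕ) : ∃ T : Finset (Multiset ℕ), T.card ≤ ((n + 1) ^ 2) ^ K ∧
    ∀ s : Multiset ℕ, (∀ a ∈ s, a ≤ n ∧ s.count a ≤ n) → s.toFinset.card ≤ K → s ∈ T := by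
  classical
  induction K with
  | zero =>
    refine ⟨{0}, by simp, ?_⟩
    intro s _ h
    simpa using h
  | succ K ih =>
    obtain ⟨T, hT, h⟩ := ih
    refine ⟨(T ×ˢ (Finset.range (n+1) ×ˢ Finset.range (n+1))).image
      (fun x => x.1 + Multiset.replicate x.2.2 x.2.1), ?_, ?_⟩
    · refine Finset.card_image_le.trans ?_
      rw [Finset.card_product, Finset.card_product, Finset.card_range, pow_succ _ K, sq (n+1)]
      rw [sq] at hT
      exact Nat.mul_le_mul_right _ hT
    · intro s hs hc
      rw [Finset.mem_image]
      by_cases h0 : s = 0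
      · subst h0
        exact ⟨(0, 0, 0), by simpa using h 0 (by simp) (by simp), by simp⟩
      · obtain ⟨a, ha⟩ := Multiset.exists_mem_of_ne_zero h0
        refine ⟨(s.filter (fun x => ¬ x = a), a, s.count a), ?_, ?_⟩
        · have := hs a ha
          simp only [Finset.mem_product, Finset.mem_range]
          refine ⟨h _ ?_ ?_, by omega, by omega⟩
          · intro b hb
            have hb' := hs b (Multiset.mem_of_mem_filter hb)
            exact ⟨hb'.1, (Multiset.count_le_of_le b (Multiset.filter_le _ s)).trans hb'.2⟩
          · rw [Multiset.toFinset_filter, Finset.filter_ne' , Finset.card_erase_of_mem (by simpa using ha)]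
            omega
        · simp only
          rw [← Multiset.filter_eq', add_comm]
          exact Multiset.filter_add_not _ s

theorem main_count (n K : ℕ) :
    K * (PF n).card ≤ (GG n).ncard + K * ((n + 1) ^ 2) ^ K := by
  classical
  obtain ⟨T, hT, hmem⟩ := few_bound n K
  have h1 : ∑ s ∈ PF n, s.toFinset.card ≤ (GG n).ncard := by
    rw [← Finset.card_sigma, Set.ncard_eq_toFinset_card _ (GG_finite n)]
    apply Finset.card_le_card_of_injOn (fun x => x.1.erase x.2)
    · rintro ⟨s, p⟩ hx
      simp only [Finset.coe_sigma, Set.mem_sigma_iff, Finset.mem_coe, mem_PF,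
        Multiset.mem_toFinset] at hx
      obtain ⟨⟨h1, h2⟩, h3⟩ := hx
      simp only [Set.Finite.coe_toFinset, GG, Set.mem_ofPred_eq]
      have := Multiset.sum_erase h3
      exact ⟨fun j hj => h1 j (Multiset.mem_of_mem_erase hj), by omega⟩
    · rintro ⟨s, p⟩ hx ⟨t, q⟩ hy hxy
      simp only [Finset.coe_sigma, Set.mem_sigma_iff, Finset.mem_coe, mem_PF,
        Multiset.mem_toFinset] at hx hy hxy
      have e1 := Multiset.sum_erase hx.2
      have e2 := Multiset.sum_erase hy.2
      have hpq : p = q := by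
        rw [hxy] at e1
        have := hx.1.2
        have := hy.1.2
        omega
      subst hpq
      have hst : s = t := by
        rw [← Multiset.cons_erase hx.2, ← Multiset.cons_erase hy.2, hxy]
      subst hst
      rfl
  have h2 : ∀ s ∈ PF n, K ≤ s.toFinset.card + (if s ∈ T then K else 0) := by
    intro s hs
    rw [mem_PF] at hs
    by_cases h : s ∈ T
    · simp [h]
    · have : K < s.toFinset.card := by
        by_contra hc
        apply h
        apply hmem s _ (not_lt.1 hc)
        intro a ha
        refine ⟨hs.2 ▸ Multiset.le_sum_of_mem ha, ?_⟩
        have h3 : s.count a ≤ s.card := Multiset.count_le_card a s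
        have h4 : s.card • 1 ≤ s.sum := Multiset.card_nsmul_le_sum (fun x hx => (hs.1 x hx).pos)
        simp at h4
        omega
      omega
  have h3 := Finset.sum_le_sum h2
  rw [Finset.sum_add_distrib, Finset.sum_const, smul_eq_mul, ← Finset.sum_filter,
    Finset.sum_const, smul_eq_mul] at h3
  have h4 : ((PF n).filter (· ∈ T)).card ≤ T.card :=
    Finset.card_le_card (fun x hx => (Finset.mem_filter.1 hx).2)
  have h5 := Nat.mul_le_mul_right K (h4.trans hT)
  rw [mul_comm K, mul_comm K]
  omega

theorem GG_lower (M : ℕ) : ∃ c : ℕ, ∀ n, (n + 1) ^ M ≤ c * (GG n).ncard := by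
  classical
  by_cases hM : M = 0
  · refine ⟨1, fun n => ?_⟩
    subst hM
    have : 0 < (GG n).ncard := (Set.ncard_pos (GG_finite n)).2 ⟨0, by simp [GG]⟩
    simpa using Nat.succ_le_of_lt this
  let p : Fin M → ℕ := fun i => Nat.nth Nat.Prime i
  have hp : ∀ i, Nat.Prime (p i) := fun i => Nat.prime_nth_prime i
  have hinj : Function.Injective p := fun i j h =>
    Fin.ext (Nat.nth_injective Nat.infinite_setOfPred_prime h)
  let c := ∑ i, p i
  have hc : 0 < c := by
    have : 0 < M := Nat.pos_of_ne_zero hM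
    exact lt_of_lt_of_le (hp ⟨0, this⟩).pos
      (Finset.single_le_sum (f := p) (fun _ _ => Nat.zero_le _) (Finset.mem_univ _))
  refine ⟨c ^ M, fun n => ?_⟩
  have hcard : (n / c + 1) ^ M ≤ (GG n).ncard := by
    have e : (n / c + 1) ^ M = (Finset.univ : Finset (Fin M → Fin (n / c + 1))).card := by simp
    rw [e, Set.ncard_eq_toFinset_card _ (GG_finite n)]
    have hcount : ∀ (a : Fin M → Fin (n / c + 1)) (i : Fin M),
        (∑ j, Multiset.replicate (a j : ℕ) (p j)).count (p i) = a i := by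
      intro a i
      rw [Multiset.count_sum', Finset.sum_eq_single i]
      · simp
      · intro j _ hj
        rw [Multiset.count_replicate, if_neg]
        exact fun h => hj (hinj h)
      · simp
    apply Finset.card_le_card_of_injOn
      (fun a => ∑ j, Multiset.replicate (a j : ℕ) (p j))
    · intro a _
      simp only [Set.Finite.coe_toFinset, GG, Set.mem_ofPred_eq]
      constructor
      · intro j hj
        rw [Multiset.mem_sum] at hj
        obtain ⟨i, _, hi⟩ := hj
        rw [Multiset.eq_of_mem_replicate hi]
        exact hp i
      · have : (∑ j, Multiset.replicate (a j : ℕ) (p j)).sum = ∑ j, (a j : ℕ) * p j := by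
          rw [← Multiset.coe_sumAddMonoidHom, map_sum]
          simp
        rw [this]
        calc ∑ j, (a j : ℕ) * p j ≤ ∑ j, (n / c) * p j :=
              Finset.sum_le_sum fun j _ => Nat.mul_le_mul_right _ (by have := (a j).2; omega)
          _ = n / c * c := by rw [← Finset.mul_sum]
          _ ≤ n := Nat.div_mul_le_self n c
    · intro a _ b _ h
      funext i
      apply Fin.ext
      rw [← hcount a i, ← hcount b i]
      simp only at h
      rw [h]
  calc (n + 1) ^ M ≤ (c * (n / c + 1)) ^ M :=
        Nat.pow_le_pow_left (Nat.lt_mul_div_succ n hc) M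
    _ = c ^ M * (n / c + 1) ^ M := mul_pow _ _ _
    _ ≤ _ := Nat.mul_le_mul_left _ hcard

/-- `p_ℙ(n) / A(n) → 0` as `n → ∞`, where `A(n) = M_{{1} ∪ ℙ}(n)` is the number of distinct
multinomial coefficients with upper entry `n` all of whose lower entries are `1` or prime. -/
theorem pP_div_A_tendsto_zero :
    Filter.Tendsto (fun n : ℕ => (pP n : ℝ) / (MS ({1} ∪ Primes) n : ℝ))
      Filter.atTop (nhds 0) := by
  have bound : ∀ K : ℕ, 0 < K → ∃ c : ℕ, ∀ n : ℕ,
      (pP n : ℝ) / (MS ({1} ∪ Primes) n : ℝ) ≤ 1 / K + c / (n + 1) := by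
    intro K hK
    obtain ⟨c, hc⟩ := GG_lower (2 * K + 1)
    refine ⟨c, fun n => ?_⟩
    have hG : 0 < (GG n).ncard := (Set.ncard_pos (GG_finite n)).2 ⟨0, by simp [GG]⟩
    have h1 := main_count n K
    have h2 := hc n
    have h3 := GG_le n
    have h4 := pP_le n
    rw [← pow_mul] at h1
    have hG' : (0:ℝ) < (GG n).ncard := by exact_mod_cast hG
    have hK' : (0:ℝ) < K := by exact_mod_cast hK
    have hn : (0:ℝ) < (n:ℝ) + 1 := by positivity
    have h1' : (K:ℝ) * (PF n).card ≤ (GG n).ncard + K * ((n:ℝ) + 1) ^ (2 * K) := by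
      exact_mod_cast h1
    have h2' : ((n:ℝ) + 1) ^ (2 * K) * (n + 1) ≤ c * (GG n).ncard := by
      rw [← pow_succ]; exact_mod_cast h2
    have h3' : ((GG n).ncard : ℝ) ≤ MS ({1} ∪ Primes) n := by exact_mod_cast h3
    have h4' : (pP n : ℝ) ≤ (PF n).card := by exact_mod_cast h4
    have h5 : ((n:ℝ) + 1) ^ (2 * K) ≤ c / (n + 1) * (GG n).ncard := by
      rw [div_mul_eq_mul_div, le_div_iff₀ hn]; exact h2'
    calc (pP n : ℝ) / (MS ({1} ∪ Primes) n : ℝ) ≤ (PF n).card / (GG n).ncard :=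
          div_le_div₀ (by positivity) h4' hG' h3'
      _ ≤ _ := by
        rw [div_le_iff₀ hG']
        have h6 : ((PF n).card : ℝ) ≤ 1 / K * (GG n).ncard + ((n:ℝ) + 1) ^ (2 * K) := by
          rw [← mul_le_mul_iff_right₀ hK']
          refine h1'.trans (le_of_eq ?_)
          field_simp
        rw [add_mul]
        linarith
  rw [Metric.tendsto_atTop]
  intro ε hε
  obtain ⟨k, hk⟩ := exists_nat_one_div_lt (half_pos hε)
  obtain ⟨c, hc⟩ := bound (k + 1) (Nat.succ_pos k)
  obtain ⟨N, hN⟩ := exists_nat_gt (c / (ε / 2))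
  refine ⟨N, fun n hn => ?_⟩
  rw [Real.dist_eq, sub_zero, abs_of_nonneg (by positivity)]
  have h1 := hc n
  have h2 : (c:ℝ) / (n + 1) < ε / 2 := by
    rw [div_lt_iff₀ (half_pos hε)] at hN
    rw [div_lt_iff₀ (by positivity)]
    have : (N:ℝ) ≤ n := by exact_mod_cast hn
    nlinarith
  push_cast at h1
  linarith
end

section
/- Let S be a set of positive integers and P a set of primes such that every element of S is strictly less than every element of P. Let λ and λ' be multisets with all elements in S, and let μ and μ' be multisets with all elements in P with μ ≠ μ'. Then ∏_{j∈λ} j! · ∏_{p∈μ} p! ≠ ∏_{j∈λ'} j! · ∏_{p∈μ'} p!. -/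
theorem fp_dvd_mem {p : ℕ} (hp : p.Prime) (lam mu : Multiset ℕ)
    (h1 : ∀ j ∈ lam, j < p) (h2 : ∀ j ∈ mu, j ≤ p)
    (h : p ∣ factorialProd lam * factorialProd mu) : p ∈ mu := by
  have key : ∀ A : Multiset ℕ, p ∣ factorialProd A → ∃ j ∈ A, p ≤ j := by
    intro A hA
    unfold factorialProd at hA
    obtain ⟨j, hj, hd⟩ := hp.prime.exists_mem_multiset_map_dvd hA
    exact ⟨j, hj, hp.dvd_factorial.1 hd⟩
  rcases hp.dvd_mul.1 h with h | h
  · obtain ⟨j, hj, hle⟩ := key _ h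
    exact absurd (h1 j hj) (by omega)
  · obtain ⟨j, hj, hle⟩ := key _ h
    have := h2 j hj
    have e : p = j := by omega
    rw [e]; exact hj

theorem fp_mem_dvd {p : ℕ} (hp : p.Prime) (lam mu : Multiset ℕ) (h : p ∈ mu) :
    p ∣ factorialProd lam * factorialProd mu := by
  apply Dvd.dvd.mul_left
  exact (Nat.dvd_factorial hp.pos le_rfl).trans
    (Multiset.dvd_prod (Multiset.mem_map_of_mem _ h))

theorem fp_eq (P : Set ℕ) (hP : ∀ q ∈ P, Nat.Prime q) (lam lam' : Multiset ℕ)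
    (hl : ∀ j ∈ lam, ∀ q ∈ P, j < q) (hl' : ∀ j ∈ lam', ∀ q ∈ P, j < q) (n : ℕ) :
    ∀ mu mu' : Multiset ℕ, mu.card ≤ n → (∀ q ∈ mu, q ∈ P) → (∀ q ∈ mu', q ∈ P) →
    factorialProd lam * factorialProd mu = factorialProd lam' * factorialProd mu' →
    mu = mu' := by
  have main : ∀ mu mu' : Multiset ℕ, (∀ q ∈ mu, q ∈ P) → (∀ q ∈ mu', q ∈ P) →
    factorialProd lam * factorialProd mu = factorialProd lam' * factorialProd mu' →
    (mu = 0 ∧ mu' = 0) ∨ ∃ p, p ∈ mu ∧ p ∈ mu' := by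
    intro mu mu' h h' e
    by_cases h0 : (mu + mu').toFinset.Nonempty
    · right
      obtain ⟨p, hp, hmax⟩ := (mu + mu').toFinset.exists_max_image id h0
      simp only [Multiset.mem_toFinset, Multiset.mem_add, id] at hp hmax
      have hpP : p ∈ P := hp.elim (h p) (h' p)
      have pp := hP p hpP
      have hd : p ∣ factorialProd lam * factorialProd mu := by
        rcases hp with hp | hp
        · exact fp_mem_dvd pp _ _ hp
        · rw [e]; exact fp_mem_dvd pp _ _ hp
      exact ⟨p, fp_dvd_mem pp lam mu (fun j hj => hl j hj p hpP)
        (fun j hj => hmax j (Or.inl hj)) hd, fp_dvd_mem pp lam' mu'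
        (fun j hj => hl' j hj p hpP) (fun j hj => hmax j (Or.inr hj)) (e ▸ hd)⟩
    · left
      rw [Finset.not_nonempty_iff_eq_empty, Multiset.toFinset_eq_empty] at h0
      simpa using h0
  induction n with
  | zero =>
    intro mu mu' hc h h' e
    rcases main mu mu' h h' e with ⟨rfl, rfl⟩ | ⟨p, hp, _⟩
    · rfl
    · have : mu = 0 := Multiset.card_eq_zero.1 (by omega)
      simp [this] at hp
  | succ n ih =>
    intro mu mu' hc h h' e
    rcases main mu mu' h h' e with ⟨rfl, rfl⟩ | ⟨p, hp, hp'⟩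
    · rfl
    · obtain ⟨a, rfl⟩ := Multiset.exists_cons_of_mem hp
      obtain ⟨b, rfl⟩ := Multiset.exists_cons_of_mem hp'
      rw [ih a b (by simpa using hc) (fun q hq => h q (Multiset.mem_cons_of_mem hq))
        (fun q hq => h' q (Multiset.mem_cons_of_mem hq))]
      simp only [factorialProd, Multiset.map_cons, Multiset.prod_cons] at e ⊢
      apply Nat.eq_of_mul_eq_mul_left p.factorial_pos
      linarith

/-- Let `S` be a set of positive integers and `P` a set of primes, with every element of `S`
strictly less than every element of `P`.  If `λ, λ'` are multisets with elements in `S`, and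
`μ ≠ μ'` are multisets with elements in `P`, then
`∏_{j∈λ} j! · ∏_{p∈μ} p! ≠ ∏_{j∈λ'} j! · ∏_{p∈μ'} p!`. -/
theorem factorialProd_mul_ne (S P : Set ℕ) (hS : ∀ s ∈ S, 0 < s)
    (hP : ∀ q ∈ P, Nat.Prime q) (hSP : ∀ s ∈ S, ∀ q ∈ P, s < q)
    (lam lam' mu mu' : Multiset ℕ)
    (hlam : ∀ j ∈ lam, j ∈ S) (hlam' : ∀ j ∈ lam', j ∈ S)
    (hmu : ∀ q ∈ mu, q ∈ P) (hmu' : ∀ q ∈ mu', q ∈ P) (hne : mu ≠ mu') :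
    factorialProd lam * factorialProd mu ≠ factorialProd lam' * factorialProd mu' := by
  intro e
  exact hne (fp_eq P hP lam lam' (fun j hj => hSP j (hlam j hj))
    (fun j hj => hSP j (hlam' j hj)) _ mu mu' le_rfl hmu hmu' e)
end

section
/- Let S be a finite nonempty set of positive integers and let d be the least common multiple of the elements of S. Then M_S(n) is eventually a quasipolynomial with period d: there exist a natural number n₀ and polynomials f_0, f_1, …, f_{d−1} with rational coefficients such that for all n ≥ n₀, M_S(n) = f_{n mod d}(n). -/
namespace MSaux

lemma wf_lowerSet {α : Type*} [PartialOrder α] [WellQuasiOrderedLE α] :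
    WellFoundedLT (LowerSet α) := by
  refine ⟨?_⟩
  rw [RelEmbedding.wellFounded_iff_isEmpty]
  refine ⟨fun e => ?_⟩
  have hlt : ∀ i j : ℕ, i < j → e j < e i := fun i j h => e.map_rel_iff.2 h
  have hex : ∀ i : ℕ, ∃ x, x ∈ e i ∧ x ∉ e (i + 1) := by
    intro i
    have := hlt i (i + 1) (Nat.lt_succ_self i)
    exact Set.not_subset.1 (fun hs => not_le_of_gt this hs)
  choose x hx hx' using hex
  obtain ⟨i, j, hij, hle⟩ := wellQuasiOrdered_le (α := α) x
  apply hx' i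
  have h1 : e j ≤ e (i + 1) := by
    rcases Nat.lt_or_ge (i + 1) j with h | h
    · exact (hlt _ _ h).le
    · have : j = i + 1 := by omega
      rw [this]
  exact (e (i + 1)).lower hle (h1 (hx j))

/-- rational series with denominator a power of `1 - X ^ d` -/
def Q (d : ℕ) (F : PowerSeries ℚ) : Prop :=
  ∃ (m : ℕ) (P : Polynomial ℚ), F * (1 - PowerSeries.X ^ d) ^ m = (P : PowerSeries ℚ)

lemma Q_poly (d : ℕ) (P : Polynomial ℚ) : Q d (P : PowerSeries ℚ) := ⟨0, P, by simp⟩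

lemma Q_add {d : ℕ} {F G : PowerSeries ℚ} (hF : Q d F) (hG : Q d G) : Q d (F + G) := by
  obtain ⟨m, P, h⟩ := hF
  obtain ⟨k, R, h'⟩ := hG
  refine ⟨m + k, P * (1 - Polynomial.X ^ d) ^ k + R * (1 - Polynomial.X ^ d) ^ m, ?_⟩
  push_cast
  rw [← h, ← h']
  ring

lemma Q_mul {d : ℕ} {F : PowerSeries ℚ} (hF : Q d F) (w : ℕ) :
    Q d (PowerSeries.X ^ w * F) := by
  obtain ⟨m, P, h⟩ := hF
  refine ⟨m, Polynomial.X ^ w * P, ?_⟩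
  push_cast
  rw [← h]
  ring

lemma Q_div {d w : ℕ} {F : PowerSeries ℚ} (hw : w ∣ d)
    (hF : Q d (F * (1 - PowerSeries.X ^ w))) : Q d F := by
  obtain ⟨m, P, h⟩ := hF
  obtain ⟨c, rfl⟩ := hw
  have h1 : (1 - Polynomial.X ^ w : Polynomial ℚ) ∣ 1 - Polynomial.X ^ (w * c) := by
    rw [pow_mul]
    exact one_sub_dvd_one_sub_pow _ _
  obtain ⟨R, hR⟩ := h1
  have hR' : (1 - PowerSeries.X ^ (w * c) : PowerSeries ℚ)
      = (1 - PowerSeries.X ^ w) * (R : PowerSeries ℚ) := by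
    have := congrArg (fun p : Polynomial ℚ => (p : PowerSeries ℚ)) hR
    push_cast at this
    exact this
  refine ⟨m + 1, P * R, ?_⟩
  push_cast
  rw [← h, pow_succ]
  nth_rw 2 [hR']
  ring

section count
variable {σ : Type*} [Fintype σ] [DecidableEq σ] (w : σ → ℕ)

def wt (a : σ → ℕ) : ℕ := ∑ i, w i * a i

lemma wt_add (a b : σ → ℕ) : wt w (a + b) = wt w a + wt w b := by
  simp [wt, mul_add, Finset.sum_add_distrib]

lemma wt_single (i : σ) : wt w (Pi.single i 1) = w i := by
  simp [wt, Pi.single_apply]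

lemma finite_wt (hw : ∀ i, 0 < w i) (n : ℕ) : {a : σ → ℕ | wt w a = n}.Finite := by
  apply (Set.finite_Iic (fun _ : σ => n)).subset
  intro a ha i
  have h1 : w i * a i ≤ wt w a :=
    Finset.single_le_sum (f := fun i => w i * a i) (fun _ _ => Nat.zero_le _) (Finset.mem_univ i)
  have h2 : wt w a = n := ha
  have := hw i
  have h3 : a i ≤ w i * a i := Nat.le_mul_of_pos_left _ this
  show a i ≤ n
  omega

noncomputable def cnt (L : Set (σ → ℕ)) (n : ℕ) : ℕ := {a | a ∈ L ∧ wt w a = n}.ncard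

noncomputable def ser (L : Set (σ → ℕ)) : PowerSeries ℚ := PowerSeries.mk fun n => (cnt w L n : ℚ)

lemma ser_split (hw : ∀ i, 0 < w i) (L : Set (σ → ℕ)) (i : σ) :
    ser w L = ser w {a | a ∈ L ∧ a i = 0}
      + PowerSeries.X ^ (w i) * ser w {a | a + Pi.single i 1 ∈ L} := by
  ext n
  rw [map_add, PowerSeries.coeff_X_pow_mul']
  simp only [ser, PowerSeries.coeff_mk]
  have hd : {a | a ∈ L ∧ wt w a = n} = {a | a ∈ {a | a ∈ L ∧ a i = 0} ∧ wt w a = n} ∪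
      {a | a ∈ L ∧ wt w a = n ∧ a i ≠ 0} := by
    ext a
    simp only [Set.mem_setOf_eq, Set.mem_union]
    tauto
  have hc : cnt w L n = cnt w {a | a ∈ L ∧ a i = 0} n
      + {a | a ∈ L ∧ wt w a = n ∧ a i ≠ 0}.ncard := by
    rw [cnt, hd, Set.ncard_union_eq ?_ ?_ ?_, cnt]
    · rw [Set.disjoint_left]
      rintro a ⟨⟨_, h⟩, _⟩ ⟨_, _, h'⟩
      exact h' h
    · exact (finite_wt w hw n).subset fun a h => h.2
    · exact (finite_wt w hw n).subset fun a h => h.2.1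
  rw [hc]
  push_cast
  congr 1
  have key : ∀ a : σ → ℕ, a i ≠ 0 → ∃ b : σ → ℕ, a = b + (Pi.single i 1 : σ → ℕ) := by
    intro a ha
    refine ⟨a - (Pi.single i 1 : σ → ℕ), ?_⟩
    rw [tsub_add_cancel_of_le]
    intro j
    by_cases hj : j = i
    · subst hj; simp; omega
    · simp [hj]
  split_ifs with h
  · rw [cnt]
    have : {a | a ∈ L ∧ wt w a = n ∧ a i ≠ 0} = (fun b : σ → ℕ => b + (Pi.single i 1 : σ → ℕ)) ''
        {a | a ∈ {a | a + Pi.single i 1 ∈ L} ∧ wt w a = n - w i} := by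
      ext a
      simp only [Set.mem_setOf_eq, Set.mem_image]
      constructor
      · rintro ⟨h1, h2, h3⟩
        obtain ⟨b, rfl⟩ := key a h3
        rw [wt_add, wt_single] at h2
        exact ⟨b, ⟨h1, by omega⟩, rfl⟩
      · rintro ⟨b, ⟨h1, h2⟩, rfl⟩
        refine ⟨h1, ?_, by simp⟩
        rw [wt_add, wt_single]
        omega
    rw [this, Set.ncard_image_of_injective _ (add_left_injective _)]
  · have : {a | a ∈ L ∧ wt w a = n ∧ a i ≠ 0} = ∅ := by
      ext a
      simp only [Set.mem_setOf_eq, Set.mem_empty_iff_false, iff_false]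
      rintro ⟨h1, h2, h3⟩
      obtain ⟨b, rfl⟩ := key a h3
      rw [wt_add, wt_single] at h2
      omega
    simp [this]

lemma Q_lower (hw : ∀ i, 0 < w i) (d : ℕ) (hd : ∀ i, w i ∣ d) (L : LowerSet (σ → ℕ)) :
    Q d (ser w (L : Set (σ → ℕ))) := by
  have wf := wf_lowerSet (α := σ → ℕ)
  induction L using wf.induction with
  | _ L ih =>
  by_cases hL : ∃ i, ∃ a ∈ L, a i ≠ 0
  · obtain ⟨i, a, haL, hai⟩ := hL
    let L0 : LowerSet (σ → ℕ) := ⟨{a | a ∈ (L : Set (σ → ℕ)) ∧ a i = 0}, by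
      rintro x y hxy ⟨h1, h2⟩
      refine ⟨L.lower hxy h1, ?_⟩
      have h3 := hxy i
      exact Nat.le_zero.1 (h2 ▸ h3)⟩
    let L1 : LowerSet (σ → ℕ) := ⟨{a | a + Pi.single i 1 ∈ (L : Set (σ → ℕ))}, by
      intro x y hxy h1
      exact L.lower (by gcongr) h1⟩
    have h0 : L0 < L := by
      refine lt_of_le_of_ne (fun x hx => hx.1) ?_
      intro h
      rw [← h] at haL
      exact hai haL.2
    have h1 : L1 ≤ L := fun x hx => L.lower (by simp) hx
    have hs := ser_split w hw (L : Set (σ → ℕ)) i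
    have q0 := ih L0 h0
    rcases h1.lt_or_eq with h1 | h1
    · rw [hs]
      exact Q_add q0 (Q_mul (ih L1 h1) _)
    · apply Q_div (hd i)
      have : ser w (L : Set (σ → ℕ)) * (1 - PowerSeries.X ^ w i) = ser w (L0 : Set (σ → ℕ)) := by
        have e1 : ser w {a | a + Pi.single i 1 ∈ (L : Set (σ → ℕ))} = ser w (L : Set (σ → ℕ)) := by
          conv_rhs => rw [← h1]
          rfl
        rw [e1] at hs
        have e0 : ser w (L0 : Set (σ → ℕ)) = ser w {a | a ∈ (L : Set (σ → ℕ)) ∧ a i = 0} := rfl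
        rw [e0]
        linear_combination hs
      rw [this]
      exact q0
  · push Not at hL
    have : ser w (L : Set (σ → ℕ)) = ((Polynomial.C (cnt w (L : Set (σ → ℕ)) 0 : ℚ) :
        Polynomial ℚ) : PowerSeries ℚ) := by
      ext n
      rw [Polynomial.coeff_coe, Polynomial.coeff_C]
      simp only [ser, PowerSeries.coeff_mk]
      split_ifs with hn
      · rw [hn]
      · have : {a | a ∈ (L : Set (σ → ℕ)) ∧ wt w a = n} = ∅ := by
          ext a
          simp only [Set.mem_setOf_eq, Set.mem_empty_iff_false, iff_false]
          rintro ⟨h1, h2⟩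
          apply hn
          rw [← h2, wt]
          exact Finset.sum_eq_zero fun i _ => by rw [hL i a h1, mul_zero]
        rw [cnt, this]; simp
    rw [this]
    exact Q_poly _ _

end count

lemma antidiff1 (p : Polynomial ℚ) :
    ∃ q : Polynomial ℚ, ∀ x : ℚ, q.eval (1 + x) - q.eval x = p.eval x := by
  induction p using Polynomial.induction_on' with
  | add p r hp hr =>
    obtain ⟨a, ha⟩ := hp
    obtain ⟨b, hb⟩ := hr
    refine ⟨a + b, fun x => ?_⟩
    simp only [Polynomial.eval_add]
    linear_combination ha x + hb x
  | monomial n c =>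
    refine ⟨Polynomial.C (c / (n + 1)) * Polynomial.bernoulli (n + 1), fun x => ?_⟩
    have := Polynomial.bernoulli_eval_one_add (n + 1) x
    simp only [Polynomial.eval_mul, Polynomial.eval_C, Polynomial.eval_monomial, this]
    have h : (n : ℚ) + 1 ≠ 0 := by positivity
    simp only [Nat.add_sub_cancel]
    push_cast
    field_simp
    ring

lemma antidiff (d : ℕ) (hd : 0 < d) (p : Polynomial ℚ) :
    ∃ q : Polynomial ℚ, ∀ x : ℚ, q.eval (x + d) - q.eval x = p.eval (x + d) := by
  obtain ⟨q, hq⟩ := antidiff1 (p.comp (Polynomial.C (d : ℚ) * Polynomial.X + Polynomial.C (d : ℚ)))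
  refine ⟨q.comp (Polynomial.C (1 / (d : ℚ)) * Polynomial.X), fun x => ?_⟩
  have h := hq (x / d)
  have hd' : (d : ℚ) ≠ 0 := by positivity
  simp only [Polynomial.eval_comp, Polynomial.eval_add, Polynomial.eval_mul, Polynomial.eval_C,
    Polynomial.eval_X] at h ⊢
  have e1 : (1 / (d : ℚ)) * (x + d) = 1 + x / d := by field_simp; ring
  have e2 : (1 / (d : ℚ)) * x = x / d := by field_simp
  have e3 : (d : ℚ) * (x / d) + d = x + d := by field_simp
  rw [e1, e2, h, e3]

def E (d : ℕ) (g : ℕ → ℚ) : Prop :=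
  ∃ (n₀ : ℕ) (f : ℕ → Polynomial ℚ), ∀ n : ℕ, n₀ ≤ n → g n = (f (n % d)).eval (n : ℚ)

lemma E_sum {d : ℕ} (hd : 0 < d) {g h : ℕ → ℚ} (hg : E d g)
    (hh : ∀ n, h (n + d) - h n = g (n + d)) : E d h := by
  obtain ⟨n₀, f, hf⟩ := hg
  choose q hq using fun r => antidiff d hd (f r)
  let D : ℕ → ℚ := fun n => h n - (q (n % d)).eval (n : ℚ)
  have hD : ∀ n, n₀ ≤ n → D (n + d) = D n := by
    intro n hn
    have h1 := hh n
    have h2 := hf (n + d) (by omega)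
    have h3 := hq (n % d) (n : ℚ)
    simp only [D]
    rw [Nat.add_mod_right] at *
    push_cast at *
    linear_combination h1 + h2 - h3
  have hD2 : ∀ k n, n₀ ≤ n → D (n + d * k) = D n := by
    intro k
    induction k with
    | zero => simp
    | succ k ih =>
      intro n hn
      rw [mul_add, mul_one, ← add_assoc, hD _ (by omega), ih n hn]
  refine ⟨d * n₀, fun r => q r + Polynomial.C (D (d * n₀ + r)), fun n hn => ?_⟩
  have hle : n₀ ≤ d * n₀ := Nat.le_mul_of_pos_left _ hd
  have hdiv : n₀ ≤ n / d := (Nat.le_div_iff_mul_le hd).2 (by rwa [mul_comm])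
  have e : n = (d * n₀ + n % d) + d * (n / d - n₀) := by
    have := Nat.mod_add_div n d
    rw [Nat.mul_sub]
    have := Nat.mul_le_mul_left d hdiv
    omega
  have e2 : D n = D (d * n₀ + n % d) := by
    conv_lhs => rw [e]
    exact hD2 _ _ (by omega)
  simp only [Polynomial.eval_add, Polynomial.eval_C]
  rw [← e2]
  simp only [D]
  ring

lemma E_of_Q {d : ℕ} (hd : 0 < d) {F : PowerSeries ℚ} (hF : Q d F) :
    E d (fun n => PowerSeries.coeff n F) := by
  obtain ⟨m, P, h⟩ := hF
  induction m generalizing F with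
  | zero =>
    refine ⟨P.natDegree + 1, fun _ => 0, fun n hn => ?_⟩
    rw [pow_zero, mul_one] at h
    simp only [h, Polynomial.coeff_coe, Polynomial.eval_zero]
    exact Polynomial.coeff_eq_zero_of_natDegree_lt (by omega)
  | succ m ih =>
    have := ih (F := F * (1 - PowerSeries.X ^ d)) (by rw [← h, pow_succ]; ring)
    refine E_sum hd this fun n => ?_
    rw [mul_sub, mul_one, map_sub, PowerSeries.coeff_mul_X_pow]

section reps
variable {σ : Type*} [Fintype σ] [LinearOrder σ] (w : σ → ℕ) (v : σ → ℕ)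

def val (a : σ → ℕ) : ℕ := ∏ i, v i ^ a i

lemma val_add (a b : σ → ℕ) : val v (a + b) = val v a * val v b := by
  simp [val, pow_add, Finset.prod_mul_distrib]

def reps : LowerSet (σ → ℕ) :=
  ⟨{a | ∀ b, wt w b = wt w a → val v b = val v a → toLex a ≤ toLex b}, by
    intro a c hca ha b hb hb'
    have e : c + (a - c) = a := add_tsub_cancel_of_le hca
    have h := ha (b + (a - c)) (by rw [wt_add, hb, ← wt_add, e])
      (by rw [val_add, hb', ← val_add, e])
    have h2 : toLex c + toLex (a - c) ≤ toLex b + toLex (a - c) := by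
      rw [← toLex_add, ← toLex_add, e]
      exact h
    exact le_of_add_le_add_right h2⟩

lemma cnt_reps (hw : ∀ i, 0 < w i) (n : ℕ) :
    (val v '' {a | wt w a = n}).ncard = cnt w (reps w v : Set (σ → ℕ)) n := by
  have : val v '' {a | wt w a = n} =
      val v '' {a | a ∈ (reps w v : Set (σ → ℕ)) ∧ wt w a = n} := by
    apply subset_antisymm
    · rintro _ ⟨a, ha, rfl⟩
      have hfin : {b | wt w b = n ∧ val v b = val v a}.Finite :=
        (finite_wt w hw n).subset fun b hb => hb.1
      obtain ⟨c, hc, hmin⟩ := Set.exists_min_image _ (fun b => toLex b) hfin ⟨a, ha, rfl⟩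
      refine ⟨c, ⟨?_, hc.1⟩, hc.2⟩
      intro b hb hb'
      exact hmin b ⟨hb.trans hc.1, hb'.trans hc.2⟩
    · exact Set.image_mono fun a ha => ha.2
  rw [this, cnt, Set.ncard_image_of_injOn]
  rintro a ⟨ha, ha'⟩ b ⟨hb, hb'⟩ hab
  have h1 := ha b (hb'.trans ha'.symm) hab.symm
  have h2 := hb a (ha'.trans hb'.symm) hab
  exact toLex.injective (le_antisymm h1 h2)

end reps

lemma MS_eq (S : Finset ℕ) (hpos : ∀ j ∈ S, 0 < j) (n : ℕ) :
    MS (↑S : Set ℕ) n = (val (fun i : S => (i : ℕ).factorial) ''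
      {a | wt (fun i : S => (i : ℕ)) a = n}).ncard := by
  rw [MS]
  congr 1
  ext x
  simp only [Set.mem_setOf_eq, Set.mem_image]
  constructor
  · rintro ⟨P, hP, rfl⟩
    have hsub : P.parts.toFinset ⊆ S := fun j hj => hP j (Multiset.mem_toFinset.1 hj)
    refine ⟨fun i => P.parts.count (i : ℕ), ?_, ?_⟩
    · rw [wt, Finset.sum_coe_sort S (fun i => i * P.parts.count i)]
      conv_rhs => rw [← P.parts_sum, Finset.sum_multiset_count_of_subset _ _ hsub]
      exact Finset.sum_congr rfl fun i _ => by rw [smul_eq_mul, mul_comm]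
    · rw [val, Finset.prod_coe_sort S (fun i => i.factorial ^ P.parts.count i), factorialProd,
        Finset.prod_multiset_map_count]
      symm
      apply Finset.prod_subset hsub
      intro i _ hi
      rw [Multiset.mem_toFinset] at hi
      rw [Multiset.count_eq_zero_of_notMem hi, pow_zero]
  · rintro ⟨a, ha, rfl⟩
    let A : Multiset ℕ := ∑ i : S, Multiset.replicate (a i) (i : ℕ)
    have hA : ∀ j ∈ A, j ∈ S := by
      intro j hj
      simp only [A, Multiset.mem_sum] at hj
      obtain ⟨i, _, hi⟩ := hj
      rw [Multiset.eq_of_mem_replicate hi]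
      exact i.2
    refine ⟨⟨A, fun {j} hj => hpos j (hA j hj), ?_⟩, hA, ?_⟩
    · rw [← ha, wt]
      simp only [A]
      rw [← Multiset.coe_sumAddMonoidHom, map_sum]
      simp [mul_comm]
    · simp only [factorialProd, A, val]
      rw [← Multiset.coe_mapAddMonoidHom, map_sum, Multiset.prod_sum]
      simp

end MSaux

theorem MS_eventually_quasipolynomial (S : Finset ℕ) (hne : S.Nonempty)
    (hpos : ∀ j ∈ S, 0 < j) :
    ∃ (n₀ : ℕ) (f : ℕ → Polynomial ℚ),
      ∀ n : ℕ, n₀ ≤ n → (MS (↑S : Set ℕ) n : ℚ) = (f (n % S.lcm id)).eval (n : ℚ) := by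
  have hd : 0 < S.lcm id := by
    rw [Nat.pos_iff_ne_zero, Ne, Finset.lcm_eq_zero_iff]
    rintro ⟨j, hj, h0⟩
    have := hpos j hj
    simp at h0
    omega
  have hw : ∀ i : S, 0 < (fun i : S => (i : ℕ)) i := fun i => hpos i i.2
  have h := MSaux.E_of_Q hd (MSaux.Q_lower (fun i : S => (i : ℕ)) hw (S.lcm id)
    (fun i => Finset.dvd_lcm (f := id) i.2)
    (MSaux.reps (fun i : S => (i : ℕ)) (fun i : S => (i : ℕ).factorial)))
  obtain ⟨n₀, f, hf⟩ := h
  refine ⟨n₀, f, fun n hn => ?_⟩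
  rw [← hf n hn, MSaux.MS_eq S hpos, MSaux.cnt_reps _ _ hw]
  simp [MSaux.ser]
end

section
/- For every natural number n ≥ 7, M_{[4]}(n) = p_{[4]}(n) − p_{[4]}(n−7) and M_{[5]}(n) = p_{[5]}(n) − p_{[5]}(n−7); moreover, for 0 ≤ n < 7, M_{[4]}(n) = p_{[4]}(n) and M_{[5]}(n) = p_{[5]}(n). -/
/-- `pS S n`: the number of partitions of `n` with all parts in `S`. -/
noncomputable def pS (S : Set ℕ) (n : ℕ) : ℕ :=
  Set.ncard {P : Nat.Partition n | ∀ j ∈ P.parts, j ∈ S}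

def AA (s n : ℕ) : Set (Multiset ℕ) := {m | (∀ j ∈ m, j ∈ Set.Icc 1 s) ∧ m.sum = n}

lemma AA_eq (s n : ℕ) : AA s n = (fun P : Nat.Partition n => P.parts) ''
    {P : Nat.Partition n | ∀ j ∈ P.parts, j ∈ Set.Icc 1 s} := by
  ext m
  constructor
  · rintro ⟨h1, h2⟩
    exact ⟨⟨m, fun {i} hi => (h1 i hi).1, h2⟩, h1, rfl⟩
  · rintro ⟨P, hP, rfl⟩
    exact ⟨hP, P.parts_sum⟩

lemma AA_fin (s n : ℕ) : (AA s n).Finite := by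
  rw [AA_eq]
  exact (Set.toFinite _).image _

lemma pS_eq (s n : ℕ) : pS (Set.Icc 1 s) n = (AA s n).ncard := by
  rw [AA_eq, Set.ncard_image_of_injective]
  · rfl
  · intro P Q h
    exact Nat.Partition.ext h

lemma MS_eq (s n : ℕ) : MS (Set.Icc 1 s) n = (factorialProd '' AA s n).ncard := by
  rw [AA_eq, Set.image_image]
  rfl

lemma fp_add (a b : Multiset ℕ) : factorialProd (a + b) = factorialProd a * factorialProd b := by
  simp [factorialProd]

lemma key (m : Multiset ℕ) (h : ∀ j ∈ m, 1 ≤ j ∧ j ≤ 5) :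
    m.sum = m.count 1 + 2 * m.count 2 + 3 * m.count 3 + 4 * m.count 4 + 5 * m.count 5 ∧
    factorialProd m = 2 ^ (m.count 2 + m.count 3 + 3 * m.count 4 + 3 * m.count 5)
      * 3 ^ (m.count 3 + m.count 4 + m.count 5) * 5 ^ m.count 5 := by
  induction m using Multiset.induction_on with
  | empty => simp [factorialProd]
  | cons a m ih =>
    obtain ⟨i1, i2⟩ := ih (fun j hj => h j (Multiset.mem_cons_of_mem hj))
    have ha := h a (Multiset.mem_cons_self a m)
    have hf : factorialProd (a ::ₘ m) = a.factorial * factorialProd m := by simp [factorialProd]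
    rw [hf, i2, Multiset.sum_cons, i1]
    obtain ⟨h1, h5⟩ := ha
    interval_cases a <;> simp [Multiset.count_cons, Nat.factorial] <;>
      first | (constructor <;> ring) | ring

lemma expo (a b c a' b' c' : ℕ) (h : 2 ^ a * 3 ^ b * 5 ^ c = 2 ^ a' * 3 ^ b' * 5 ^ c') :
    a = a' ∧ b = b' ∧ c = c' := by
  have H : ∀ x y z : ℕ, (2 ^ x * 3 ^ y * 5 ^ z).factorization =
      Finsupp.single 2 x + Finsupp.single 3 y + Finsupp.single 5 z := by
    intro x y z
    rw [Nat.factorization_mul (by positivity) (by positivity),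
      Nat.factorization_mul (by positivity) (by positivity),
      Nat.Prime.factorization_pow (by norm_num), Nat.Prime.factorization_pow (by norm_num),
      Nat.Prime.factorization_pow (by norm_num)]
  have := congrArg Nat.factorization h
  rw [H, H] at this
  have h2 := DFunLike.congr_fun this 2
  have h3 := DFunLike.congr_fun this 3
  have h5 := DFunLike.congr_fun this 5
  simp [Finsupp.single_apply] at h2 h3 h5
  exact ⟨h2, h3, h5⟩

def T : Multiset ℕ := {2, 2, 3}
def U : Multiset ℕ := {1, 1, 1, 4}

lemma T_le (m : Multiset ℕ) (h2 : 2 ≤ m.count 2) (h3 : 1 ≤ m.count 3) : T ≤ m := by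
  rw [Multiset.le_iff_count]
  intro a
  by_cases e2 : a = 2
  · subst e2; simpa [T] using h2
  by_cases e3 : a = 3
  · subst e3; simpa [T] using h3
  · simp [T, e2, e3, Multiset.count_cons, Multiset.count_singleton]

lemma inj (s n : ℕ) (hs : s ≤ 5) :
    Set.InjOn factorialProd {m ∈ AA s n | ¬ T ≤ m} := by
  rintro m ⟨⟨h1, h2⟩, h3⟩ m' ⟨⟨h1', h2'⟩, h3'⟩ e
  have g : ∀ j ∈ m, 1 ≤ j ∧ j ≤ 5 := fun j hj => ⟨(h1 j hj).1, (h1 j hj).2.trans hs⟩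
  have g' : ∀ j ∈ m', 1 ≤ j ∧ j ≤ 5 := fun j hj => ⟨(h1' j hj).1, (h1' j hj).2.trans hs⟩
  obtain ⟨k1, k2⟩ := key m g
  obtain ⟨k1', k2'⟩ := key m' g'
  rw [k2, k2'] at e
  obtain ⟨e1, e2, e3⟩ := expo _ _ _ _ _ _ e
  have t : ¬ (2 ≤ m.count 2 ∧ 1 ≤ m.count 3) := fun a => h3 (T_le m a.1 a.2)
  have t' : ¬ (2 ≤ m'.count 2 ∧ 1 ≤ m'.count 3) := fun a => h3' (T_le m' a.1 a.2)
  ext a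
  by_cases ha : 1 ≤ a ∧ a ≤ 5
  · obtain ⟨ha1, ha5⟩ := ha
    interval_cases a <;> omega
  · rw [Multiset.count_eq_zero_of_notMem (fun h => ha (g a h)),
      Multiset.count_eq_zero_of_notMem (fun h => ha (g' a h))]

lemma surj (s n : ℕ) (hs : 4 ≤ s) : ∀ k : ℕ, ∀ m ∈ AA s n, m.count 3 = k →
    ∃ m' ∈ {m ∈ AA s n | ¬ T ≤ m}, factorialProd m' = factorialProd m := by
  intro k
  induction k with
  | zero =>
    intro m hm hk
    refine ⟨m, ⟨hm, fun h => ?_⟩, rfl⟩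
    have := Multiset.count_le_of_le 3 h
    simp [T] at this
    omega
  | succ k ih =>
    intro m hm hk
    by_cases h : T ≤ m
    · obtain ⟨t, rfl⟩ := Multiset.le_iff_exists_add.1 h
      obtain ⟨h1, h2⟩ := hm
      have hU : U + t ∈ AA s n ∧ (U + t).count 3 = k := by
        refine ⟨⟨?_, ?_⟩, ?_⟩
        · intro j hj
          rcases Multiset.mem_add.1 hj with hj | hj
          · simp [U] at hj
            rcases hj with rfl | rfl <;> simp <;> omega
          · exact h1 j (Multiset.mem_add.2 (Or.inr hj))
        · rw [← h2, Multiset.sum_add, Multiset.sum_add]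
          rfl
        · rw [Multiset.count_add] at hk ⊢
          have a : T.count 3 = 1 := by decide
          have b : U.count 3 = 0 := by decide
          omega
      obtain ⟨m', hm', e⟩ := ih (U + t) hU.1 hU.2
      refine ⟨m', hm', ?_⟩
      rw [e, fp_add, fp_add]
      rfl
    · exact ⟨m, ⟨hm, h⟩, rfl⟩

lemma MS_eq' (s n : ℕ) (h4 : 4 ≤ s) (h5 : s ≤ 5) :
    MS (Set.Icc 1 s) n = {m ∈ AA s n | ¬ T ≤ m}.ncard := by
  rw [MS_eq, ← Set.ncard_image_of_injOn (inj s n h5)]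
  congr 1
  ext v
  constructor
  · rintro ⟨m, hm, rfl⟩
    exact surj s n h4 _ m hm rfl
  · rintro ⟨m, hm, rfl⟩
    exact ⟨m, hm.1, rfl⟩

lemma split (s n : ℕ) : (AA s n).ncard =
    {m ∈ AA s n | ¬ T ≤ m}.ncard + {m ∈ AA s n | T ≤ m}.ncard := by
  rw [← Set.ncard_union_eq ?_ ((AA_fin s n).subset fun m h => h.1)
    ((AA_fin s n).subset fun m h => h.1)]
  · congr 1
    ext m
    simp only [Set.mem_union, Set.mem_ofPred_eq]
    tauto
  · rw [Set.disjoint_left]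
    exact fun m h h' => h.2 h'.2

lemma T_sum : T.sum = 7 := rfl

lemma shift (s n : ℕ) (hs : 4 ≤ s) (hn : 7 ≤ n) :
    {m ∈ AA s n | T ≤ m}.ncard = (AA s (n - 7)).ncard := by
  rw [← Set.ncard_image_of_injective (AA s (n - 7)) (add_right_injective T)]
  congr 1
  ext m
  constructor
  · rintro ⟨⟨h1, h2⟩, h⟩
    obtain ⟨t, rfl⟩ := Multiset.le_iff_exists_add.1 h
    refine ⟨t, ⟨fun j hj => h1 j (Multiset.mem_add.2 (Or.inr hj)), ?_⟩, rfl⟩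
    rw [Multiset.sum_add, T_sum] at h2
    omega
  · rintro ⟨t, ⟨h1, h2⟩, rfl⟩
    refine ⟨⟨?_, ?_⟩, Multiset.le_add_right _ _⟩
    · intro j hj
      rcases Multiset.mem_add.1 hj with hj | hj
      · simp [T] at hj
        rcases hj with rfl | rfl <;> simp <;> omega
      · exact h1 j hj
    · simp only [Multiset.sum_add, T_sum]
      omega

lemma small (s n : ℕ) (hn : n < 7) : {m ∈ AA s n | T ≤ m}.ncard = 0 := by
  have : {m ∈ AA s n | T ≤ m} = ∅ := by
    rw [Set.eq_empty_iff_forall_notMem]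
    rintro m ⟨⟨h1, h2⟩, h⟩
    obtain ⟨t, rfl⟩ := Multiset.le_iff_exists_add.1 h
    rw [Multiset.sum_add, T_sum] at h2
    omega
  rw [this, Set.ncard_empty]

lemma big (s n : ℕ) (h4 : 4 ≤ s) (h5 : s ≤ 5) (hn : 7 ≤ n) :
    (MS (Set.Icc 1 s) n : ℤ) = (pS (Set.Icc 1 s) n : ℤ) - (pS (Set.Icc 1 s) (n - 7) : ℤ) := by
  rw [MS_eq' s n h4 h5, pS_eq, pS_eq, split s n, shift s n h4 hn]
  push_cast
  ring

lemma sml (s n : ℕ) (h4 : 4 ≤ s) (h5 : s ≤ 5) (hn : n < 7) :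
    MS (Set.Icc 1 s) n = pS (Set.Icc 1 s) n := by
  rw [MS_eq' s n h4 h5, pS_eq, split s n, small s n hn, add_zero]

/-- For `n ≥ 7`, `M_{[4]}(n) = p_{[4]}(n) − p_{[4]}(n−7)` and
`M_{[5]}(n) = p_{[5]}(n) − p_{[5]}(n−7)`; for `0 ≤ n < 7`,
`M_{[4]}(n) = p_{[4]}(n)` and `M_{[5]}(n) = p_{[5]}(n)`. -/
theorem MS_four_five (n : ℕ) :
    (7 ≤ n →
      (MS (Set.Icc 1 4) n : ℤ)
        = (pS (Set.Icc 1 4) n : ℤ) - (pS (Set.Icc 1 4) (n - 7) : ℤ) ∧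
      (MS (Set.Icc 1 5) n : ℤ)
        = (pS (Set.Icc 1 5) n : ℤ) - (pS (Set.Icc 1 5) (n - 7) : ℤ)) ∧
    (n < 7 →
      MS (Set.Icc 1 4) n = pS (Set.Icc 1 4) n ∧
      MS (Set.Icc 1 5) n = pS (Set.Icc 1 5) n) := by
  exact ⟨fun h => ⟨big 4 n (by norm_num) (by norm_num) h, big 5 n (by norm_num) (by norm_num) h⟩,
    fun h => ⟨sml 4 n (by norm_num) (by norm_num) h, sml 5 n (by norm_num) (by norm_num) h⟩⟩
end

section
/- For every natural number n ≥ 13 and for S = [6] as well as S = [7], M_S(n) + p_S(n−7) + p_S(n−8) + p_S(n−10) = p_S(n) + p_S(n−12) + p_S(n−13). -/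
namespace MSaux

def T (S : Set ℕ) (n : ℕ) : Set (Multiset ℕ) := {A | A.sum = n ∧ ∀ j ∈ A, j ∈ S}

def D1 : Multiset ℕ := {2, 2, 3}
def D2 : Multiset ℕ := {3, 5}
def D3 : Multiset ℕ := {1, 4, 5}
def D4 : Multiset ℕ := {2, 2, 3, 5}
def D5 : Multiset ℕ := {1, 3, 4, 5}

theorem T_image (S : Set ℕ) (hS : ∀ j ∈ S, 0 < j) (n : ℕ) :
    T S n = Nat.Partition.parts '' {P : Nat.Partition n | ∀ j ∈ P.parts, j ∈ S} := by
  ext A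
  constructor
  · rintro ⟨h1, h2⟩
    exact ⟨⟨A, fun {i} hi => hS i (h2 i hi), h1⟩, h2, rfl⟩
  · rintro ⟨P, hP, rfl⟩
    exact ⟨P.parts_sum, hP⟩

theorem T_finite (S : Set ℕ) (hS : ∀ j ∈ S, 0 < j) (n : ℕ) : (T S n).Finite := by
  rw [T_image S hS]
  exact (Set.toFinite _).image _

theorem pS_eq (S : Set ℕ) (hS : ∀ j ∈ S, 0 < j) (n : ℕ) : pS S n = (T S n).ncard := by
  rw [T_image S hS, pS, Set.ncard_image_of_injective]
  intro P Q h
  exact Nat.Partition.ext h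

theorem MS_eq_s16 (S : Set ℕ) (hS : ∀ j ∈ S, 0 < j) (n : ℕ) :
    MS S n = (factorialProd '' T S n).ncard := by
  rw [T_image S hS, MS, Set.image_image]
  congr 1

theorem shift (S : Set ℕ) (n : ℕ) (D : Multiset ℕ) (hD : ∀ j ∈ D, j ∈ S) (h : D.sum ≤ n) :
    {A | A ∈ T S n ∧ D ≤ A}.ncard = (T S (n - D.sum)).ncard := by
  have : {A | A ∈ T S n ∧ D ≤ A} = (fun A => D + A) '' T S (n - D.sum) := by
    ext A
    constructor
    · rintro ⟨⟨h1, h2⟩, h3⟩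
      obtain ⟨B, rfl⟩ := Multiset.le_iff_exists_add.1 h3
      refine ⟨B, ⟨?_, fun j hj => h2 j (Multiset.mem_add.2 (Or.inr hj))⟩, rfl⟩
      rw [Multiset.sum_add] at h1
      omega
    · rintro ⟨B, ⟨h1, h2⟩, rfl⟩
      refine ⟨⟨?_, ?_⟩, Multiset.le_add_right _ _⟩
      · simp only [Multiset.sum_add]; omega
      · intro j hj
        rcases Multiset.mem_add.1 hj with hj | hj
        · exact hD j hj
        · exact h2 j hj
  rw [this, Set.ncard_image_of_injective]
  intro A B h
  exact add_left_cancel h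

theorem fp_add (A B : Multiset ℕ) :
    factorialProd (A + B) = factorialProd A * factorialProd B := by
  simp [factorialProd]

theorem leD1 (A : Multiset ℕ) : D1 ≤ A ↔ 2 ≤ A.count 2 ∧ 1 ≤ A.count 3 := by
  rw [Multiset.le_iff_count]
  constructor
  · intro h
    have h2 := h 2
    have h3 := h 3
    simp [D1, Multiset.count_cons, Multiset.count_singleton] at h2 h3
    omega
  · intro h a
    simp only [D1, Multiset.insert_eq_cons, Multiset.count_cons, Multiset.count_singleton]
    split_ifs <;> subst_vars <;> omega

theorem leD2 (A : Multiset ℕ) : D2 ≤ A ↔ 1 ≤ A.count 3 ∧ 1 ≤ A.count 5 := by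
  rw [Multiset.le_iff_count]
  constructor
  · intro h
    have h2 := h 3
    have h3 := h 5
    simp only [D2, Multiset.insert_eq_cons, Multiset.count_cons, Multiset.count_singleton] at h2 h3
    norm_num at h2 h3
    omega
  · intro h a
    simp only [D2, Multiset.insert_eq_cons, Multiset.count_cons, Multiset.count_singleton]
    split_ifs <;> subst_vars <;> omega

theorem leD3 (A : Multiset ℕ) :
    D3 ≤ A ↔ 1 ≤ A.count 1 ∧ 1 ≤ A.count 4 ∧ 1 ≤ A.count 5 := by
  rw [Multiset.le_iff_count]
  constructor
  · intro h
    have h2 := h 1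
    have h3 := h 4
    have h4 := h 5
    simp only [D3, Multiset.insert_eq_cons, Multiset.count_cons, Multiset.count_singleton] at h2 h3 h4
    norm_num at h2 h3 h4
    omega
  · intro h a
    simp only [D3, Multiset.insert_eq_cons, Multiset.count_cons, Multiset.count_singleton]
    split_ifs <;> subst_vars <;> omega

theorem leD4 (A : Multiset ℕ) : D4 ≤ A ↔ D1 ≤ A ∧ D2 ≤ A := by
  rw [leD1, leD2, Multiset.le_iff_count]
  constructor
  · intro h
    have h2 := h 2
    have h3 := h 3
    have h4 := h 5
    simp only [D4, Multiset.insert_eq_cons, Multiset.count_cons, Multiset.count_singleton] at h2 h3 h4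
    norm_num at h2 h3 h4
    omega
  · intro h a
    simp only [D4, Multiset.insert_eq_cons, Multiset.count_cons, Multiset.count_singleton]
    split_ifs <;> subst_vars <;> omega

theorem leD5 (A : Multiset ℕ) : D5 ≤ A ↔ D2 ≤ A ∧ D3 ≤ A := by
  rw [leD3, leD2, Multiset.le_iff_count]
  constructor
  · intro h
    have h1 := h 1
    have h2 := h 4
    have h3 := h 3
    have h4 := h 5
    simp only [D5, Multiset.insert_eq_cons, Multiset.count_cons, Multiset.count_singleton] at h1 h2 h3 h4
    norm_num at h1 h2 h3 h4
    omega
  · intro h a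
    simp only [D5, Multiset.insert_eq_cons, Multiset.count_cons, Multiset.count_singleton]
    split_ifs <;> subst_vars <;> omega

def Nf (A : Multiset ℕ) : Prop := ¬ D1 ≤ A ∧ ¬ D2 ≤ A ∧ ¬ D3 ≤ A

theorem fp_formula (A : Multiset ℕ) (h : ∀ j ∈ A, j ∈ Set.Icc 1 7) :
    factorialProd A =
      2 ^ (A.count 2 + A.count 3 + 3 * A.count 4 + 3 * A.count 5 + 4 * A.count 6 + 4 * A.count 7)
      * 3 ^ (A.count 3 + A.count 4 + A.count 5 + 2 * A.count 6 + 2 * A.count 7)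
      * 5 ^ (A.count 5 + A.count 6 + A.count 7) * 7 ^ (A.count 7) ∧
    A.sum = A.count 1 + 2 * A.count 2 + 3 * A.count 3 + 4 * A.count 4 + 5 * A.count 5
      + 6 * A.count 6 + 7 * A.count 7 := by
  induction A using Multiset.induction with
  | empty => simp [factorialProd]
  | cons a A ih =>
    obtain ⟨ih1, ih2⟩ := ih (fun j hj => h j (Multiset.mem_cons_of_mem hj))
    have ha := h a (Multiset.mem_cons_self a A)
    have e : factorialProd (a ::ₘ A) = a.factorial * factorialProd A := by simp [factorialProd]
    rw [e, ih1, Multiset.sum_cons, ih2]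
    obtain ⟨l, u⟩ := ha
    simp only [Multiset.count_cons]
    interval_cases a <;> norm_num [Nat.factorial] <;> (try constructor) <;> ring

theorem exps {a b c d a' b' c' d' : ℕ}
    (h : 2 ^ a * 3 ^ b * 5 ^ c * 7 ^ d = 2 ^ a' * 3 ^ b' * 5 ^ c' * 7 ^ d') :
    a = a' ∧ b = b' ∧ c = c' ∧ d = d' := by
  have key : ∀ p a b c d : ℕ, (2 ^ a * 3 ^ b * 5 ^ c * 7 ^ d).factorization p =
      a * (Nat.factorization 2 p) + b * (Nat.factorization 3 p)
      + c * (Nat.factorization 5 p) + d * (Nat.factorization 7 p) := by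
    intro p a b c d
    rw [Nat.factorization_mul (by positivity) (by positivity),
      Nat.factorization_mul (by positivity) (by positivity),
      Nat.factorization_mul (by positivity) (by positivity)]
    simp [Nat.factorization_pow]
  have p2 : Nat.Prime 2 := by norm_num
  have p3 : Nat.Prime 3 := by norm_num
  have p5 : Nat.Prime 5 := by norm_num
  have p7 : Nat.Prime 7 := by norm_num
  have H : ∀ p, _ := fun p => (key p a b c d).symm.trans ((congrArg (fun x => x.factorization p) h).trans (key p a' b' c' d'))
  have h2 := H 2
  have h3 := H 3
  have h5 := H 5
  have h7 := H 7
  simp [p2.factorization, p3.factorization, p5.factorization, p7.factorization] at h2 h3 h5 h7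
  exact ⟨h2, h3, h5, h7⟩

theorem lin6 {x1 x2 x3 x4 x5 x6 x7 y1 y2 y3 y4 y5 y6 y7 : ℕ}
    (e1 : x2 + x3 + 3 * x4 + 3 * x5 + 4 * x6 = y2 + y3 + 3 * y4 + 3 * y5 + 4 * y6)
    (e2 : x3 + x4 + x5 + 2 * x6 = y3 + y4 + y5 + 2 * y6)
    (e3 : x5 + x6 = y5 + y6 ∧ x7 = y7)
    (e4 : x1 + 2 * x2 + 3 * x3 + 4 * x4 + 5 * x5 + 6 * x6 + 7 * x7
      = y1 + 2 * y2 + 3 * y3 + 4 * y4 + 5 * y5 + 6 * y6 + 7 * y7)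
    (n2 : ¬ (1 ≤ x3 ∧ 1 ≤ x5)) (n3 : ¬ (1 ≤ x1 ∧ 1 ≤ x4 ∧ 1 ≤ x5)) : y6 ≤ x6 := by
  by_contra h
  obtain ⟨e3, rfl⟩ := e3
  have h5 : 1 ≤ x5 := by omega
  have h3 : x3 = 0 := by omega
  have h4 : 1 ≤ x4 := by omega
  have h1 : x1 = 0 := by omega
  subst h3 h1
  clear n2 n3
  omega

theorem uniq (A B : Multiset ℕ) (hA : ∀ j ∈ A, j ∈ Set.Icc 1 7) (hB : ∀ j ∈ B, j ∈ Set.Icc 1 7)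
    (hs : A.sum = B.sum) (hf : factorialProd A = factorialProd B) (nA : Nf A) (nB : Nf B) :
    A = B := by
  obtain ⟨a1, a2⟩ := fp_formula A hA
  obtain ⟨b1, b2⟩ := fp_formula B hB
  rw [a1, b1] at hf
  rw [a2, b2] at hs
  obtain ⟨e1, e2, e3, e4⟩ := exps hf
  simp only [Nf, leD1, leD2, leD3] at nA nB
  obtain ⟨n1, n2, n3⟩ := nA
  obtain ⟨m1, m2, m3⟩ := nB
  clear a1 b1 hf a2 b2
  have all : A.count 1 = B.count 1 ∧ A.count 2 = B.count 2 ∧ A.count 3 = B.count 3 ∧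
      A.count 4 = B.count 4 ∧ A.count 5 = B.count 5 ∧ A.count 6 = B.count 6 ∧
      A.count 7 = B.count 7 := by
    have g7 : A.count 7 = B.count 7 := e4
    have g6 : A.count 6 = B.count 6 := le_antisymm
      (lin6 (by omega) (by omega) (by omega) hs.symm m2 m3)
      (lin6 (by omega) (by omega) (by omega) hs n2 n3)
    have g4 : A.count 4 = B.count 4 := by omega
    omega
  obtain ⟨c1, c2, c3, c4, c5, c6, c7⟩ := all
  ext j
  by_cases hj : j ∈ Set.Icc 1 7
  · obtain ⟨l, u⟩ := hj
    interval_cases j <;> assumption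
  · rw [Multiset.count_eq_zero_of_notMem (fun h => hj (hA j h)),
      Multiset.count_eq_zero_of_notMem (fun h => hj (hB j h))]

theorem step (S : Set ℕ) (hS : Set.Icc 1 6 ⊆ S) (n : ℕ) (D E A : Multiset ℕ)
    (hs : E.sum = D.sum) (hf : factorialProd E = factorialProd D) (hE : ∀ j ∈ E, j ∈ Set.Icc 1 6)
    (h : D ≤ A) (hA : A ∈ T S n) :
    ∃ R, A = D + R ∧ (E + R) ∈ T S n ∧ factorialProd (E + R) = factorialProd A := by
  obtain ⟨R, rfl⟩ := Multiset.le_iff_exists_add.1 h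
  refine ⟨R, rfl, ⟨?_, ?_⟩, ?_⟩
  · rw [← hA.1, Multiset.sum_add, Multiset.sum_add, hs]
  · intro j hj
    rcases Multiset.mem_add.1 hj with hj | hj
    · exact hS (hE j hj)
    · exact hA.2 j (Multiset.mem_add.2 (Or.inr hj))
  · rw [fp_add, fp_add, hf]

theorem exist (S : Set ℕ) (hS : Set.Icc 1 6 ⊆ S) (n : ℕ) : ∀ (m : ℕ) (A : Multiset ℕ),
    A.count 3 + 2 * A.count 5 = m → A ∈ T S n →
    ∃ B ∈ T S n, Nf B ∧ factorialProd B = factorialProd A := by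
  intro m
  induction m using Nat.strong_induction_on with
  | _ m ih =>
    intro A hm hA
    by_cases h1 : D1 ≤ A
    · obtain ⟨R, rfl, h2, h3⟩ := step S hS n D1 {1, 1, 1, 4} A (by decide) (by decide)
        (by simp) h1 hA
      obtain ⟨B, hB, hN, hf⟩ := ih _ (by
        rw [← hm]; simp [D1, Multiset.count_cons, Multiset.count_singleton]) _ rfl h2
      exact ⟨B, hB, hN, hf.trans h3⟩
    by_cases h1' : D2 ≤ A
    · obtain ⟨R, rfl, h2, h3⟩ := step S hS n D2 {1, 1, 6} A (by decide) (by decide)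
        (by simp) h1' hA
      obtain ⟨B, hB, hN, hf⟩ := ih _ (by
        rw [← hm]; simp [D2, Multiset.count_cons, Multiset.count_singleton]; try omega) _ rfl h2
      exact ⟨B, hB, hN, hf.trans h3⟩
    by_cases h1'' : D3 ≤ A
    · obtain ⟨R, rfl, h2, h3⟩ := step S hS n D3 {2, 2, 6} A (by decide) (by decide)
        (by simp) h1'' hA
      obtain ⟨B, hB, hN, hf⟩ := ih _ (by
        rw [← hm]; simp [D3, Multiset.count_cons, Multiset.count_singleton]; try omega) _ rfl h2
      exact ⟨B, hB, hN, hf.trans h3⟩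
    exact ⟨A, hA, ⟨h1, h1', h1''⟩, rfl⟩

theorem MS_nf (S : Set ℕ) (h6 : Set.Icc 1 6 ⊆ S) (h7 : S ⊆ Set.Icc 1 7) (n : ℕ) :
    MS S n = {A | A ∈ T S n ∧ Nf A}.ncard := by
  rw [MS_eq_s16 S (fun j hj => (h7 hj).1)]
  have : factorialProd '' T S n = factorialProd '' {A | A ∈ T S n ∧ Nf A} := by
    ext v
    constructor
    · rintro ⟨A, hA, rfl⟩
      obtain ⟨B, hB, hN, hf⟩ := exist S h6 n _ A rfl hA
      exact ⟨B, ⟨hB, hN⟩, hf⟩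
    · rintro ⟨A, hA, rfl⟩
      exact ⟨A, hA.1, rfl⟩
  rw [this, Set.ncard_image_of_injOn]
  rintro A ⟨hA, nA⟩ B ⟨hB, nB⟩ hf
  exact uniq A B (fun j hj => h7 (hA.2 j hj)) (fun j hj => h7 (hB.2 j hj))
    (hA.1.trans hB.1.symm) hf nA nB

theorem main (S : Set ℕ) (h6 : Set.Icc 1 6 ⊆ S) (h7 : S ⊆ Set.Icc 1 7) (n : ℕ) (hn : 13 ≤ n) :
    MS S n + pS S (n - 7) + pS S (n - 8) + pS S (n - 10)
        = pS S n + pS S (n - 12) + pS S (n - 13) := by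
  classical
  have hS : ∀ j ∈ S, 0 < j := fun j hj => (h7 hj).1
  have s1 := shift S n D1 (fun j hj => h6 (by revert j; simp [D1])) (by simp [D1]; omega)
  have s2 := shift S n D2 (fun j hj => h6 (by revert j; simp [D2])) (by simp [D2]; omega)
  have s3 := shift S n D3 (fun j hj => h6 (by revert j; simp [D3])) (by simp [D3]; omega)
  have s4 := shift S n D4 (fun j hj => h6 (by revert j; simp [D4])) (by simp [D4]; omega)
  have s5 := shift S n D5 (fun j hj => h6 (by revert j; simp [D5])) (by simp [D5]; omega)
  have q1 : D1.sum = 7 := by decide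
  have q2 : D2.sum = 8 := by decide
  have q3 : D3.sum = 10 := by decide
  have q4 : D4.sum = 12 := by decide
  have q5 : D5.sum = 13 := by decide
  rw [q1] at s1
  rw [q2] at s2
  rw [q3] at s3
  rw [q4] at s4
  rw [q5] at s5
  simp only [pS_eq S hS]
  rw [MS_nf S h6 h7, ← s1, ← s2, ← s3, ← s4, ← s5]
  have fin := T_finite S hS n
  have conv : ∀ Q : Multiset ℕ → Prop,
      {A | A ∈ T S n ∧ Q A}.ncard = ∑ A ∈ fin.toFinset, if Q A then 1 else 0 := by
    intro Q
    rw [← Finset.card_filter, ← Set.ncard_coe_finset]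
    congr 1
    ext A
    simp
  have conv0 : (T S n).ncard = ∑ A ∈ fin.toFinset, 1 := by
    rw [Set.ncard_eq_toFinset_card _ fin]; simp
  rw [conv0]
  simp only [conv]
  simp only [← Finset.sum_add_distrib]
  refine Finset.sum_congr rfl fun A _ => ?_
  simp only [leD4, leD5, Nf]
  have h13 : D1 ≤ A → D3 ≤ A → D2 ≤ A := by
    rw [leD1, leD2, leD3]; omega
  by_cases a1 : D1 ≤ A <;> by_cases a2 : D2 ≤ A <;> by_cases a3 : D3 ≤ A <;> simp_all

end MSaux

theorem MS_six_seven (n : ℕ) (hn : 13 ≤ n) :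
    ∀ S : Set ℕ, (S = Set.Icc 1 6 ∨ S = Set.Icc 1 7) →
      MS S n + pS S (n - 7) + pS S (n - 8) + pS S (n - 10)
        = pS S n + pS S (n - 12) + pS S (n - 13) := by
  rintro S (rfl | rfl)
  · exact MSaux.main _ subset_rfl (Set.Icc_subset_Icc le_rfl (by norm_num)) n hn
  · exact MSaux.main _ (Set.Icc_subset_Icc le_rfl (by norm_num)) subset_rfl n hn
end

section
/- For every natural number n, 56·(i(n) + 1) > n; that is, i(n) > n/56 − 1, where i(n) is the number of irreducible pairs of partitions of n. -/
/-- Two partitions of `n` form an irreducible pair if they are distinct, have no parts in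
common, and yield the same multinomial coefficient (equal products of factorials of parts). -/
def IsIrredPair {n : ℕ} (a b : Nat.Partition n) : Prop :=
  a ≠ b ∧ (∀ j : ℕ, ¬(j ∈ a.parts ∧ j ∈ b.parts)) ∧
    factorialProd a.parts = factorialProd b.parts

/-- `numIrredPairs n`: the number of (unordered) irreducible pairs of partitions of `n`. -/
noncomputable def numIrredPairs (n : ℕ) : ℕ :=
  Set.ncard {s : Set (Nat.Partition n) | ∃ a b, IsIrredPair a b ∧ s = {a, b}}

/-- Left multiset. -/
def lamM (a b : ℕ) : Multiset ℕ :=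
  Multiset.replicate a 6 + Multiset.replicate b 4 + Multiset.replicate (2 * a + 3 * b) 1

/-- Right multiset. -/
def muM (a b : ℕ) : Multiset ℕ :=
  Multiset.replicate a 5 + Multiset.replicate (a + b) 3 + Multiset.replicate (2 * b) 2

lemma mem_lamM {a b j : ℕ} (h : j ∈ lamM a b) : j = 6 ∨ j = 4 ∨ j = 1 := by
  simp only [lamM, Multiset.mem_add, Multiset.mem_replicate] at h
  tauto

lemma mem_muM {a b j : ℕ} (h : j ∈ muM a b) : j = 5 ∨ j = 3 ∨ j = 2 := by
  simp only [muM, Multiset.mem_add, Multiset.mem_replicate] at h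
  tauto

/-- Left partition. -/
def lamP {n : ℕ} (a b : ℕ) (h : 8 * a + 7 * b = n) : Nat.Partition n where
  parts := lamM a b
  parts_pos := by
    intro i hi
    rcases mem_lamM hi with h | h | h <;> omega
  parts_sum := by
    simp [lamM]
    omega

/-- Right partition. -/
def muP {n : ℕ} (a b : ℕ) (h : 8 * a + 7 * b = n) : Nat.Partition n where
  parts := muM a b
  parts_pos := by
    intro i hi
    rcases mem_muM hi with h | h | h <;> omega
  parts_sum := by
    simp [muM]
    omega

lemma fact_eq (a b : ℕ) : factorialProd (lamM a b) = factorialProd (muM a b) := by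
  have h6 : Nat.factorial 6 = 120 * 6 := rfl
  have h5 : Nat.factorial 5 = 120 := rfl
  have h4 : Nat.factorial 4 = 6 * 2 ^ 2 := rfl
  have h3 : Nat.factorial 3 = 6 := rfl
  have h2 : Nat.factorial 2 = 2 := rfl
  simp only [factorialProd, lamM, muM, Multiset.map_add, Multiset.map_replicate,
    Multiset.prod_add, Multiset.prod_replicate, h6, h5, h4, h3, h2, Nat.factorial_one, one_pow,
    mul_pow, pow_add, pow_mul]
  ring

lemma lam_ne_mu {a b c d : ℕ} (h : 0 < a + b) : lamM c d ≠ muM a b := by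
  intro e
  have h3 : 3 ∈ muM a b := by
    simp only [muM, Multiset.mem_add, Multiset.mem_replicate]
    left; right
    exact ⟨by omega, trivial⟩
  rw [← e] at h3
  rcases mem_lamM h3 with h | h | h <;> omega

lemma lam_inj {a b c d : ℕ} (h : lamM a b = lamM c d) : b = d := by
  have := congrArg (Multiset.count 4) h
  simpa [lamM, Multiset.count_replicate] using this

/-- `56·(i(n) + 1) > n`, i.e. `i(n) > n/56 − 1`. -/
theorem irredPairs_lower_bound (n : ℕ) : n < 56 * (numIrredPairs n + 1) := by
  suffices h : n / 56 ≤ numIrredPairs n by omega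
  have key : ∀ t : Fin (n / 56), 8 * ((n - 7 * ((7 * n) % 8 + 8 * t.1)) / 8)
      + 7 * ((7 * n) % 8 + 8 * t.1) = n := by
    intro t
    have := t.2
    omega
  let f : Fin (n / 56) → Set (Nat.Partition n) := fun t =>
    {lamP _ _ (key t), muP _ _ (key t)}
  have finj : Function.Injective f := by
    intro s t hst
    have hm : lamP _ _ (key s) ∈ f t := by
      rw [← hst]; exact Set.mem_insert _ _
    rcases hm with hm | hm
    · have := lam_inj (congrArg Nat.Partition.parts hm)
      apply Fin.ext
      omega
    · refine absurd (congrArg Nat.Partition.parts hm) (lam_ne_mu ?_)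
      have := key t
      have := t.2
      omega
  have hsub : Set.range f ⊆
      {s : Set (Nat.Partition n) | ∃ a b, IsIrredPair a b ∧ s = {a, b}} := by
    rintro _ ⟨t, rfl⟩
    refine ⟨_, _, ⟨?_, ?_, ?_⟩, rfl⟩
    · intro hm
      refine absurd (congrArg Nat.Partition.parts hm) (lam_ne_mu ?_)
      have := key t
      have := t.2
      omega
    · rintro j ⟨h1, h2⟩
      rcases mem_lamM h1 with h | h | h <;> rcases mem_muM h2 with h' | h' | h' <;> omega
    · exact fact_eq _ _
  have hc := Set.ncard_le_ncard hsub (Set.toFinite _)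
  rw [← Set.image_univ, Set.ncard_image_of_injective _ finj, Set.ncard_univ, Nat.card_fin] at hc
  exact hc
end

section
/- For all integers a ≥ 2 and m ≥ 1, (a^m)! · ((a−1)!)^m = (a^m − 1)! · (a!)^m; moreover, the multiset consisting of a^m, the part a−1 taken m times, and the part 1 taken m−1 times, and the multiset consisting of a^m − 1 and the part a taken m times, both sum to a^m + am − 1, so the two corresponding partitions of a^m + am − 1 yield the same multinomial coefficient. -/
/-- For `a ≥ 2` and `m ≥ 1`, `(a^m)! · ((a−1)!)^m = (a^m − 1)! · (a!)^m`; moreover the multiset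
`{a^m} ∪ {a−1 (m times)} ∪ {1 (m−1 times)}` and the multiset `{a^m − 1} ∪ {a (m times)}` both
sum to `a^m + am − 1`, and the corresponding partitions of `a^m + am − 1` yield the same
multinomial coefficient. -/
theorem irreducible_family (a m : ℕ) (ha : 2 ≤ a) (hm : 1 ≤ m) :
    (a ^ m).factorial * (a - 1).factorial ^ m
      = (a ^ m - 1).factorial * a.factorial ^ m ∧
    ((a ^ m) ::ₘ (Multiset.replicate m (a - 1) + Multiset.replicate (m - 1) 1)).sum
      = a ^ m + a * m - 1 ∧
    ((a ^ m - 1) ::ₘ Multiset.replicate m a).sum = a ^ m + a * m - 1 ∧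
    factorialProd ((a ^ m) ::ₘ (Multiset.replicate m (a - 1) + Multiset.replicate (m - 1) 1))
      = factorialProd ((a ^ m - 1) ::ₘ Multiset.replicate m a) := by
  have h1 : (a ^ m).factorial * (a - 1).factorial ^ m
      = (a ^ m - 1).factorial * a.factorial ^ m := by
    have hp : a ^ m ≠ 0 := by positivity
    rw [← Nat.mul_factorial_pred hp, ← Nat.mul_factorial_pred (show a ≠ 0 by omega), mul_pow]
    ring
  have hp : 1 ≤ a ^ m := Nat.one_le_pow _ _ (by omega)
  refine ⟨h1, ?_, ?_, ?_⟩
  · obtain ⟨b, rfl⟩ : ∃ b, a = b + 1 := ⟨a - 1, by omega⟩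
    simp only [Multiset.sum_cons, Multiset.sum_add, Multiset.sum_replicate, smul_eq_mul,
      Nat.add_sub_cancel, mul_one]
    have : (b + 1) * m = m * b + m := by ring
    omega
  · simp only [Multiset.sum_cons, Multiset.sum_replicate, smul_eq_mul]
    rw [mul_comm m a]
    omega
  · simpa [factorialProd] using h1
end

section
/- For all natural numbers a and b, (6!)^a · (4!)^b = (5!)^a · (3!)^{a+b} · (2!)^{2b}; moreover, if a and b are not both zero, then the multiset with the part 6 taken a times, 4 taken b times, and 1 taken 2a+3b times, and the multiset with the part 5 taken a times, 3 taken a+b times, and 2 taken 2b times, are distinct partitions of n = 8a + 7b with no parts in common, and hence form an irreducible pair of partitions of 8a + 7b. -/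
/-- `(6!)^a · (4!)^b = (5!)^a · (3!)^{a+b} · (2!)^{2b}`; moreover, if `a` and `b` are not both
zero, the multiset with part `6` taken `a` times, `4` taken `b` times and `1` taken `2a+3b`
times, and the multiset with part `5` taken `a` times, `3` taken `a+b` times and `2` taken
`2b` times, are distinct partitions of `8a + 7b` with no parts in common, hence form an
irreducible pair of partitions of `8a + 7b`. -/
theorem irreducible_pair_family (a b : ℕ) :
    Nat.factorial 6 ^ a * Nat.factorial 4 ^ b
      = Nat.factorial 5 ^ a * Nat.factorial 3 ^ (a + b) * Nat.factorial 2 ^ (2 * b) ∧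
    (¬(a = 0 ∧ b = 0) →
      ∀ lam mu : Multiset ℕ,
        lam = Multiset.replicate a 6 + Multiset.replicate b 4
                + Multiset.replicate (2 * a + 3 * b) 1 →
        mu = Multiset.replicate a 5 + Multiset.replicate (a + b) 3
                + Multiset.replicate (2 * b) 2 →
        lam ≠ mu ∧ lam.sum = 8 * a + 7 * b ∧ mu.sum = 8 * a + 7 * b ∧
        (∀ j : ℕ, ¬(j ∈ lam ∧ j ∈ mu)) ∧ factorialProd lam = factorialProd mu ∧
        ∃ P Q : Nat.Partition (8 * a + 7 * b),
          P.parts = lam ∧ Q.parts = mu ∧ IsIrredPair P Q) := by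
  have key : Nat.factorial 6 ^ a * Nat.factorial 4 ^ b
      = Nat.factorial 5 ^ a * Nat.factorial 3 ^ (a + b) * Nat.factorial 2 ^ (2 * b) := by
    have h6 : Nat.factorial 6 = Nat.factorial 5 * Nat.factorial 3 := by decide
    have h4 : Nat.factorial 4 = Nat.factorial 3 * Nat.factorial 2 ^ 2 := by decide
    rw [h6, h4, mul_pow, mul_pow, pow_add, pow_mul]
    ac_rfl
  refine ⟨key, ?_⟩
  intro hab lam mu hl hm
  have hls : lam.sum = 8 * a + 7 * b := by
    subst hl
    simp only [Multiset.sum_add, Multiset.sum_replicate, smul_eq_mul]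
    ring
  have hms : mu.sum = 8 * a + 7 * b := by
    subst hm
    simp only [Multiset.sum_add, Multiset.sum_replicate, smul_eq_mul]
    ring
  have hlm : ∀ j ∈ lam, j = 6 ∨ j = 4 ∨ j = 1 := by
    intro j hj
    subst hl
    simp only [Multiset.mem_add, Multiset.mem_replicate] at hj
    tauto
  have hmm : ∀ j ∈ mu, j = 5 ∨ j = 3 ∨ j = 2 := by
    intro j hj
    subst hm
    simp only [Multiset.mem_add, Multiset.mem_replicate] at hj
    tauto
  have hd : ∀ j : ℕ, ¬(j ∈ lam ∧ j ∈ mu) := by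
    rintro j ⟨h1, h2⟩
    have := hlm j h1
    have := hmm j h2
    omega
  have hne : lam ≠ mu := by
    intro h
    have h0 : lam = 0 := Multiset.eq_zero_of_forall_notMem fun j hj => hd j ⟨hj, h ▸ hj⟩
    rw [h0, Multiset.sum_zero] at hls
    omega
  have hf : factorialProd lam = factorialProd mu := by
    subst hl hm
    simp only [factorialProd, Multiset.map_add, Multiset.map_replicate, Multiset.prod_add,
      Multiset.prod_replicate, Nat.factorial_one, one_pow, mul_one]
    exact key
  refine ⟨hne, hls, hms, hd, hf, ⟨lam, ?_, hls⟩, ⟨mu, ?_, hms⟩, rfl, rfl, ?_, hd, hf⟩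
  · intro j hj
    have := hlm j hj
    omega
  · intro j hj
    have := hmm j hj
    omega
  · intro h
    exact hne (congrArg Nat.Partition.parts h)
end
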